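/- arXiv:1806.05792 — 5 statements merged into one kernel-verified Lean document; each statement's English description precedes it below -/
import Mathlib

section
/- Let n ≥ 2, let ζ₀ ∈ ℂⁿ satisfy ζ₀·ζ₀ = 0 and |Re ζ₀| = |Im ζ₀| = 1, let R > 0, and let f ∈ C_c^∞(ℝⁿ; ℂ) with supp(f) ⊂ B(0, R). Then Φ = N_{ζ₀}⁻¹ f is C^∞ on ℝⁿ, ∂^α Φ = N_{ζ₀}⁻¹(∂^α f) for every multi-index α, Φ satisfies ζ₀·∇Φ = f everywhere in ℝⁿ, and there is a constant C = C(R), independent of f, of ζ₀, and of k, such that for every k ≥ 0, max_{|α| ≤ k} sup_{ℝⁿ} |∂^α Φ| ≤ C max_{|α| ≤ k} sup_{ℝⁿ} |∂^α f|. -/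
/-!
Write `K y = 1 / (y₁ + i y₂)` and `Φ = Ninv ζ f`. Since `Re ζ` and `Im ζ` are orthonormal, `Φ x` is
`1 / 2π` times the integral of `K` against the slice `y ↦ f (x - y₁ Re ζ - y₂ Im ζ)`, and this slice
is supported in the square of half-side `R` around the projection of `x` onto the plane of
`Re ζ, Im ζ` (`eq_zero_of_notMem_square`).

* The kernel is locally integrable and bounded by `1` outside `[-1, 1]²`, so its integral over
  any such square is bounded in terms of `R` only. This gives `sup |Φ| ≤ C sup |f|`
  (`norm_Ninv_le`).
* Near each point the slices have a common compact support, so `Φ` is a convolution with a smooth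
  parameter and hence smooth (`contDiff_Ninv`), and one may differentiate under the integral
  (`pd_Ninv`). Partial derivatives of `f` are again smooth and supported in the closed ball of radius
  `R`, so induction gives `∂^α Φ = Ninv ζ (∂^α f)`, and the sup-norm estimate applies to each `∂^α f`.
* In the plane variables `ζ·∇f` becomes `-(∂₁ + i∂₂)` of the slice, so `ζ·∇Φ = f` is the
  Cauchy–Pompeiu formula (`integral_dbar_mul_cauchyKernel`).
-/

open MeasureTheory Filter Topology

/-- Classical partial derivative in the `j`-th coordinate direction. -/
noncomputable def pd {n : ℕ} (f : (Fin n → ℝ) → ℂ) (j : Fin n) (x : Fin n → ℝ) : ℂ :=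
  fderiv ℝ f x (Pi.single j 1)

/-- Iterated partial derivative `∂^α` where the multi-index `α` is recorded
as a list of coordinate directions. -/
noncomputable def pdIter {n : ℕ} : List (Fin n) → ((Fin n → ℝ) → ℂ) → ((Fin n → ℝ) → ℂ)
  | [], f => f
  | j :: l, f => pdIter l (fun x => pd f j x)

/-- The Cauchy-transform type inverse `N_{ζ₀}⁻¹` of the operator `N_{ζ₀} = ζ₀·∇`. -/
noncomputable def Ninv {n : ℕ} (ζ : Fin n → ℂ) (f : (Fin n → ℝ) → ℂ)
    (x : Fin n → ℝ) : ℂ :=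
  (1 / (2 * Real.pi)) * ∫ y : ℝ × ℝ,
    f (fun i => x i - y.1 * (ζ i).re - y.2 * (ζ i).im) / ((y.1 : ℂ) + (y.2 : ℂ) * Complex.I)

/-! ### The Cauchy kernel -/

/-- The Cauchy kernel `1 / (y₁ + i y₂)` on the plane. -/
noncomputable def cauchyKernel (y : ℝ × ℝ) : ℂ := ((y.1 : ℂ) + (y.2 : ℂ) * Complex.I)⁻¹

lemma norm_cauchyKernel_le (y : ℝ × ℝ) : ‖cauchyKernel y‖ ≤ 1 * ‖y‖ ^ (-1 : ℝ) := by
  rw [one_mul, Real.rpow_neg_one, cauchyKernel, norm_inv]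
  rcases eq_or_ne y 0 with rfl | hy
  · simp
  · refine inv_anti₀ (norm_pos_iff.2 hy) ?_
    have h1 := Complex.abs_re_le_norm ((y.1 : ℂ) + (y.2 : ℂ) * Complex.I)
    have h2 := Complex.abs_im_le_norm ((y.1 : ℂ) + (y.2 : ℂ) * Complex.I)
    simp only [Complex.add_re, Complex.ofReal_re, Complex.mul_re, Complex.I_re, mul_zero,
      Complex.ofReal_im, Complex.I_im, mul_one, sub_zero, add_zero] at h1
    simp only [Complex.add_im, Complex.ofReal_im, Complex.mul_im, Complex.I_re, mul_zero,
      Complex.ofReal_re, Complex.I_im, mul_one, zero_add, add_zero] at h2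
    rw [Prod.norm_def]
    exact max_le h1 h2

lemma measurable_cauchyKernel : Measurable cauchyKernel := by
  unfold cauchyKernel
  fun_prop

lemma locallyIntegrable_cauchyKernel : LocallyIntegrable cauchyKernel := by
  refine locallyIntegrable_of_norm_le_rpow (C := 1) (α := 1) ?_ ?_
    (Eventually.of_forall norm_cauchyKernel_le) measurable_cauchyKernel.aestronglyMeasurable
  · simp
  · simp

/-! ### Slices along the plane spanned by `Re ζ` and `Im ζ` -/

/-- The orthogonal projection of `x` onto the plane spanned by `Re ζ` and `Im ζ`, in the
coordinates given by these two vectors, which are assumed orthonormal wherever this is used. -/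
noncomputable def planeProj {n : ℕ} (ζ : Fin n → ℂ) (x : Fin n → ℝ) : ℝ × ℝ :=
  (∑ i, x i * (ζ i).re, ∑ i, x i * (ζ i).im)

lemma continuous_planeProj {n : ℕ} (ζ : Fin n → ℂ) : Continuous (planeProj ζ) := by
  unfold planeProj
  fun_prop

lemma sum_re_mul_im {n : ℕ} {ζ : Fin n → ℂ} (h : (∑ i, ζ i * ζ i) = 0) :
    ∑ i, (ζ i).re * (ζ i).im = 0 := by
  have h2 := congrArg Complex.im h
  simp only [Complex.im_sum, Complex.mul_im, Complex.zero_im, Finset.sum_add_distrib] at h2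
  have : ∑ i, (ζ i).im * (ζ i).re = ∑ i, (ζ i).re * (ζ i).im :=
    Finset.sum_congr rfl fun i _ => mul_comm _ _
  linarith

/-- A point of the plane `x + span (Re ζ, Im ζ)` is at least as far from the origin as its
in-plane part. -/
lemma planeProj_sq_le {n : ℕ} {ζ : Fin n → ℂ} (h : (∑ i, ζ i * ζ i) = 0)
    (hre : (∑ i, (ζ i).re ^ 2) = 1) (him : (∑ i, (ζ i).im ^ 2) = 1)
    (x : Fin n → ℝ) (y : ℝ × ℝ) :
    (y.1 - (planeProj ζ x).1) ^ 2 + (y.2 - (planeProj ζ x).2) ^ 2 ≤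
      ∑ i, (x i - y.1 * (ζ i).re - y.2 * (ζ i).im) ^ 2 := by
  have key : ∀ u v : ℝ, ∑ i, (x i - u * (ζ i).re - v * (ζ i).im) ^ 2 =
      ∑ i, x i ^ 2 - 2 * u * (planeProj ζ x).1 - 2 * v * (planeProj ζ x).2 + u ^ 2 + v ^ 2 := by
    intro u v
    have e : ∀ i, (x i - u * (ζ i).re - v * (ζ i).im) ^ 2 =
        x i ^ 2 - 2 * u * (x i * (ζ i).re) - 2 * v * (x i * (ζ i).im)
          + u ^ 2 * (ζ i).re ^ 2 + v ^ 2 * (ζ i).im ^ 2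
          + 2 * u * v * ((ζ i).re * (ζ i).im) := fun i => by ring
    simp only [e, Finset.sum_add_distrib, Finset.sum_sub_distrib, ← Finset.mul_sum, hre, him,
      sum_re_mul_im h, planeProj]
    ring
  have h0 : 0 ≤ ∑ i, (x i - (planeProj ζ x).1 * (ζ i).re - (planeProj ζ x).2 * (ζ i).im) ^ 2 :=
    Finset.sum_nonneg fun i _ => sq_nonneg _
  rw [key] at h0 ⊢
  nlinarith

/-- If `f` is supported in the closed ball of radius `R`, then on the plane through `x` it is
supported in the square of half-side `R` centred at the projection of `x`. -/
lemma eq_zero_of_notMem_square {n : ℕ} {ζ : Fin n → ℂ} (h : (∑ i, ζ i * ζ i) = 0)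
    (hre : (∑ i, (ζ i).re ^ 2) = 1) (him : (∑ i, (ζ i).im ^ 2) = 1)
    {R : ℝ} (hR : 0 < R) {f : (Fin n → ℝ) → ℂ}
    (hf : ∀ x : Fin n → ℝ, R ^ 2 < ∑ i, x i ^ 2 → f x = 0)
    (x : Fin n → ℝ) {y : ℝ × ℝ} (hy : y ∉ Metric.closedBall (planeProj ζ x) R) :
    f (fun i => x i - y.1 * (ζ i).re - y.2 * (ζ i).im) = 0 := by
  refine hf _ (lt_of_lt_of_le ?_ (planeProj_sq_le h hre him x y))
  rw [Metric.mem_closedBall, not_le, Prod.dist_eq, lt_max_iff, Real.dist_eq, Real.dist_eq] at hy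
  rcases hy with hy | hy
  · have := pow_lt_pow_left₀ hy hR.le two_ne_zero
    rw [sq_abs] at this
    nlinarith [sq_nonneg (y.2 - (planeProj ζ x).2)]
  · have := pow_lt_pow_left₀ hy hR.le two_ne_zero
    rw [sq_abs] at this
    nlinarith [sq_nonneg (y.1 - (planeProj ζ x).1)]

lemma Ninv_eq {n : ℕ} (ζ : Fin n → ℂ) (f : (Fin n → ℝ) → ℂ) (x : Fin n → ℝ) :
    Ninv ζ f x = (1 / (2 * Real.pi)) * ∫ y : ℝ × ℝ,
      f (fun i => x i - y.1 * (ζ i).re - y.2 * (ζ i).im) * cauchyKernel y := by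
  simp only [Ninv, cauchyKernel, div_eq_mul_inv]

/-! ### Sup-norm estimate and smoothness -/

/-- The constant in the sup-norm estimate: `1 / 2π` times the sum of the integral of `|K|` over
`[-1, 1]²` (the unit ball of the sup norm on `ℝ × ℝ`) and the area of a square of side `2R`. -/
noncomputable def cauchyConst (R : ℝ) : ℝ :=
  1 / (2 * Real.pi) * ((∫ y in Metric.closedBall (0 : ℝ × ℝ) 1, ‖cauchyKernel y‖) +
    volume.real (Metric.closedBall (0 : ℝ × ℝ) R))

/-- Sup-norm estimate. The kernel is bounded by `1` outside `[-1, 1]²`, so `|K|` integrates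
over any translate of a square of side `2R` to at most a constant depending only on `R`. -/
lemma norm_Ninv_le {n : ℕ} {ζ : Fin n → ℂ} (h : (∑ i, ζ i * ζ i) = 0)
    (hre : (∑ i, (ζ i).re ^ 2) = 1) (him : (∑ i, (ζ i).im ^ 2) = 1)
    {R : ℝ} (hR : 0 < R) {f : (Fin n → ℝ) → ℂ}
    (hf : ∀ x : Fin n → ℝ, R ^ 2 < ∑ i, x i ^ 2 → f x = 0) {D : ℝ} (hD : ∀ x, ‖f x‖ ≤ D)
    (x : Fin n → ℝ) : ‖Ninv ζ f x‖ ≤ cauchyConst R * D := by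
  have hD0 : 0 ≤ D := (norm_nonneg _).trans (hD 0)
  set B := Metric.closedBall (0 : ℝ × ℝ) 1
  set Q := Metric.closedBall (planeProj ζ x) R
  have hQfin : volume Q ≠ ⊤ := measure_closedBall_lt_top.ne
  have hB : IntegrableOn (fun y => ‖cauchyKernel y‖) B :=
    (locallyIntegrable_cauchyKernel.integrableOn_isCompact (isCompact_closedBall _ _)).norm
  have hBm : MeasurableSet B := measurableSet_closedBall
  have hQm : MeasurableSet Q := measurableSet_closedBall
  have i1 : Integrable (B.indicator fun y => ‖cauchyKernel y‖) := hB.integrable_indicator hBm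
  have i2 : Integrable (Q.indicator fun _ => (1 : ℝ)) :=
    (integrableOn_const hQfin).integrable_indicator hQm
  have hint := norm_integral_le_of_norm_le ((i1.add i2).const_mul D)
    (f := fun y : ℝ × ℝ =>
      f (fun i => x i - y.1 * (ζ i).re - y.2 * (ζ i).im) * cauchyKernel y)
    (Eventually.of_forall fun y => by
      by_cases hy : y ∈ Q
      · rw [norm_mul]
        refine mul_le_mul (hD _) ?_ (norm_nonneg _) hD0
        by_cases hyB : y ∈ B
        · simp [hy, hyB]
        · have h1 : 1 ≤ ‖y‖ := by
            simp only [B, Metric.mem_closedBall, dist_zero_right, not_le] at hyB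
            exact hyB.le
          have h2 := norm_cauchyKernel_le y
          rw [one_mul, Real.rpow_neg_one] at h2
          simpa [hy, hyB] using h2.trans (inv_le_one_of_one_le₀ h1)
      · rw [eq_zero_of_notMem_square h hre him hR hf x hy, zero_mul, norm_zero]
        refine mul_nonneg hD0 (add_nonneg ?_ ?_)
        · exact Set.indicator_nonneg (fun _ _ => norm_nonneg _) _
        · exact Set.indicator_nonneg (fun _ _ => zero_le_one) _)
  have hQvol : volume.real Q = volume.real (Metric.closedBall (0 : ℝ × ℝ) R) := by
    simp only [measureReal_def, Q]
    rw [Measure.addHaar_closedBall_center]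
  simp only [Pi.add_apply] at hint
  rw [integral_const_mul, integral_add i1 i2, integral_indicator hBm, integral_indicator hQm,
    setIntegral_const, hQvol, smul_eq_mul, mul_one] at hint
  rw [Ninv_eq, norm_mul, cauchyConst, mul_assoc]
  have hpi : ‖(1 / (2 * Real.pi) : ℂ)‖ = 1 / (2 * Real.pi) := by
    simp [abs_of_pos Real.pi_pos]
  rw [hpi]
  refine mul_le_mul_of_nonneg_left (hint.trans_eq (mul_comm _ _)) (by positivity)

/-- Smoothness: locally in `x`, `Ninv ζ f x` is the value at `0` of the convolution of the locally
integrable Cauchy kernel with a smooth function supported in a fixed compact set and depending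
smoothly on the parameter `x`. -/
lemma contDiff_Ninv {n : ℕ} {ζ : Fin n → ℂ} (h : (∑ i, ζ i * ζ i) = 0)
    (hre : (∑ i, (ζ i).re ^ 2) = 1) (him : (∑ i, (ζ i).im ^ 2) = 1)
    {R : ℝ} (hR : 0 < R) {f : (Fin n → ℝ) → ℂ} (hs : ContDiff ℝ (⊤ : ℕ∞) f)
    (hf : ∀ x : Fin n → ℝ, R ^ 2 < ∑ i, x i ^ 2 → f x = 0) :
    ContDiff ℝ (⊤ : ℕ∞) (Ninv ζ f) := by
  rw [contDiff_iff_contDiffAt]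
  intro x₀
  let g : (Fin n → ℝ) → ℝ × ℝ → ℂ := fun p z =>
    f (fun i => p i - (-z.1) * (ζ i).re - (-z.2) * (ζ i).im)
  let s : Set (Fin n → ℝ) := {p | dist (planeProj ζ p) (planeProj ζ x₀) < 1}
  have hso : IsOpen s :=
    isOpen_lt ((continuous_planeProj ζ).dist continuous_const) continuous_const
  have hx₀ : x₀ ∈ s := by simp [s]
  have hgc : ContDiff ℝ (⊤ : ℕ∞) ↿g := by
    refine hs.comp ?_
    rw [contDiff_pi]
    intro i
    fun_prop
  have hgs : ∀ p, ∀ z, p ∈ s → z ∉ Metric.closedBall (-planeProj ζ x₀) (R + 1) → g p z = 0 := by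
    intro p z hp hz
    refine eq_zero_of_notMem_square h hre him hR hf p (y := (-z.1, -z.2)) fun hmem => hz ?_
    have hp' : dist (planeProj ζ p) (planeProj ζ x₀) < 1 := hp
    rw [Metric.mem_closedBall] at hmem ⊢
    have e : dist z (-planeProj ζ x₀) = dist (-z) (planeProj ζ x₀) := by
      rw [← dist_neg_neg, neg_neg]
    rw [e]
    exact (dist_triangle (-z) (planeProj ζ p) _).trans (add_le_add hmem hp'.le)
  have hconv := contDiffOn_convolution_right_with_param (n := ⊤) (ContinuousLinearMap.mul ℝ ℂ)
    hso (isCompact_closedBall _ _) hgs locallyIntegrable_cauchyKernel hgc.contDiffOn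
    (μ := volume)
  have hat := (hconv.contDiffAt (x := (x₀, (0 : ℝ × ℝ)))
    ((hso.prod isOpen_univ).mem_nhds ⟨hx₀, Set.mem_univ _⟩)).comp x₀
      (contDiffAt_id.prodMk contDiffAt_const)
  have heq : Ninv ζ f = fun x => (1 / (2 * Real.pi) : ℂ) *
      (convolution cauchyKernel (g x) (ContinuousLinearMap.mul ℝ ℂ) volume) 0 := by
    funext x
    rw [Ninv_eq, convolution_def]
    congr 1
    refine integral_congr_ae (Eventually.of_forall fun y => ?_)
    simp [g, mul_comm, sub_eq_add_neg]
  rw [heq]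
  exact contDiffAt_const.mul hat

/-! ### Partial derivatives of `Ninv` -/

lemma contDiff_pd {n : ℕ} {f : (Fin n → ℝ) → ℂ} (hs : ContDiff ℝ (⊤ : ℕ∞) f) (j : Fin n) :
    ContDiff ℝ (⊤ : ℕ∞) (fun x => pd f j x) :=
  (hs.fderiv_right (m := (⊤ : ℕ∞)) le_rfl).clm_apply contDiff_const

lemma hasCompactSupport_pd {n : ℕ} {f : (Fin n → ℝ) → ℂ} (hc : HasCompactSupport f)
    (j : Fin n) : HasCompactSupport (fun x => pd f j x) :=
  hc.fderiv_apply ℝ _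

lemma pd_eq_zero {n : ℕ} {R : ℝ} {f : (Fin n → ℝ) → ℂ}
    (hf : ∀ x : Fin n → ℝ, R ^ 2 < ∑ i, x i ^ 2 → f x = 0) (j : Fin n)
    (x : Fin n → ℝ) (hx : R ^ 2 < ∑ i, x i ^ 2) : pd f j x = 0 := by
  have ho : IsOpen {x : Fin n → ℝ | R ^ 2 < ∑ i, x i ^ 2} :=
    isOpen_lt continuous_const (by fun_prop)
  have he : f =ᶠ[𝓝 x] fun _ => 0 := by
    filter_upwards [ho.mem_nhds hx] with z hz using hf z hz
  simp [pd, he.fderiv_eq]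

lemma hasDerivAt_line {n : ℕ} {f : (Fin n → ℝ) → ℂ} (hs : ContDiff ℝ (⊤ : ℕ∞) f) (j : Fin n)
    (x : Fin n → ℝ) (t : ℝ) :
    HasDerivAt (fun t : ℝ => f (x + t • Pi.single j 1)) (pd f j (x + t • Pi.single j 1)) t := by
  have h1 : HasDerivAt (fun t : ℝ => x + t • (Pi.single j 1 : Fin n → ℝ)) (Pi.single j 1) t := by
    simpa using ((hasDerivAt_id t).smul_const (Pi.single j 1 : Fin n → ℝ)).const_add x
  exact ((hs.differentiable (by simp) _).hasFDerivAt).comp_hasDerivAt t h1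

/-- The slice along the plane through `x` of a continuous function supported in a ball, multiplied
by the Cauchy kernel, is integrable. -/
lemma integrable_slice {n : ℕ} {ζ : Fin n → ℂ} (h : (∑ i, ζ i * ζ i) = 0)
    (hre : (∑ i, (ζ i).re ^ 2) = 1) (him : (∑ i, (ζ i).im ^ 2) = 1)
    {R : ℝ} (hR : 0 < R) {f : (Fin n → ℝ) → ℂ} (hs : Continuous f)
    (hf : ∀ x : Fin n → ℝ, R ^ 2 < ∑ i, x i ^ 2 → f x = 0) (x : Fin n → ℝ) :
    Integrable (fun y : ℝ × ℝ =>
      f (fun i => x i - y.1 * (ζ i).re - y.2 * (ζ i).im) * cauchyKernel y) := by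
  refine locallyIntegrable_cauchyKernel.integrable_smul_left_of_hasCompactSupport
    (g := fun y : ℝ × ℝ => f (fun i => x i - y.1 * (ζ i).re - y.2 * (ζ i).im)) ?_ ?_
  · exact hs.comp (by fun_prop)
  · exact HasCompactSupport.intro (isCompact_closedBall (planeProj ζ x) R)
      fun y hy => eq_zero_of_notMem_square h hre him hR hf x hy

/-- Differentiation under the integral sign. -/
lemma pd_Ninv {n : ℕ} {ζ : Fin n → ℂ} (h : (∑ i, ζ i * ζ i) = 0)
    (hre : (∑ i, (ζ i).re ^ 2) = 1) (him : (∑ i, (ζ i).im ^ 2) = 1)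
    {R : ℝ} (hR : 0 < R) {f : (Fin n → ℝ) → ℂ} (hs : ContDiff ℝ (⊤ : ℕ∞) f)
    (hc : HasCompactSupport f)
    (hf : ∀ x : Fin n → ℝ, R ^ 2 < ∑ i, x i ^ 2 → f x = 0) (j : Fin n) (x : Fin n → ℝ) :
    pd (Ninv ζ f) j x = Ninv ζ (fun x => pd f j x) x := by
  obtain ⟨M, hM⟩ := (hasCompactSupport_pd hc j).exists_bound_of_continuous
    (contDiff_pd hs j).continuous
  have hM0 : 0 ≤ M := (norm_nonneg _).trans (hM 0)
  let e : Fin n → ℝ := Pi.single j 1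
  let s : Set ℝ := {t | dist (planeProj ζ (x + t • e)) (planeProj ζ x) < 1}
  have hs0 : s ∈ 𝓝 (0 : ℝ) := by
    refine IsOpen.mem_nhds (isOpen_lt (((continuous_planeProj ζ).comp
      (by fun_prop : Continuous fun t : ℝ => x + t • e)).dist continuous_const)
      continuous_const) ?_
    show dist (planeProj ζ (x + (0 : ℝ) • e)) (planeProj ζ x) < 1
    simp
  let Q := Metric.closedBall (planeProj ζ x) (R + 1)
  have hQm : MeasurableSet Q := measurableSet_closedBall
  have hQ : IntegrableOn (fun y => ‖cauchyKernel y‖) Q :=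
    (locallyIntegrable_cauchyKernel.integrableOn_isCompact (isCompact_closedBall _ _)).norm
  have hcont : ∀ (g : (Fin n → ℝ) → ℂ) (z : Fin n → ℝ), Continuous g →
      AEStronglyMeasurable (fun y : ℝ × ℝ =>
        g (fun i => z i - y.1 * (ζ i).re - y.2 * (ζ i).im) * cauchyKernel y) volume :=
    fun g z hg => ((hg.comp (by fun_prop)).measurable.mul
      measurable_cauchyKernel).aestronglyMeasurable
  have key := (hasDerivAt_integral_of_dominated_loc_of_deriv_le (μ := (volume : Measure (ℝ × ℝ)))
    (𝕜 := ℝ) (x₀ := 0) (s := s)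
    (F := fun t y => f (fun i => (x + t • e) i - y.1 * (ζ i).re - y.2 * (ζ i).im) *
      cauchyKernel y)
    (F' := fun t y => pd f j (fun i => (x + t • e) i - y.1 * (ζ i).re - y.2 * (ζ i).im) *
      cauchyKernel y)
    (bound := fun y => M * Q.indicator (fun y => ‖cauchyKernel y‖) y) hs0
    (Eventually.of_forall fun t => hcont f _ hs.continuous)
    (integrable_slice h hre him hR hs.continuous hf _)
    (hcont (fun x => pd f j x) _ (contDiff_pd hs j).continuous)
    (Eventually.of_forall fun y t ht => ?_)
    ((hQ.integrable_indicator hQm).const_mul M)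
    (Eventually.of_forall fun y t _ => ?_)).2
  · have hN : HasDerivAt (fun t : ℝ => Ninv ζ f (x + t • e)) (Ninv ζ (fun x => pd f j x) x) 0 := by
      simp only [Ninv_eq]
      simpa using key.const_mul (1 / (2 * Real.pi) : ℂ)
    have h2 := hasDerivAt_line (contDiff_Ninv h hre him hR hs hf) j x 0
    simpa using h2.unique hN
  · by_cases hy : y ∈ Q
    · rw [norm_mul]
      simpa [hy] using mul_le_mul_of_nonneg_right (hM _) (norm_nonneg (cauchyKernel y))
    · have : pd f j (fun i => (x + t • e) i - y.1 * (ζ i).re - y.2 * (ζ i).im) = 0 := by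
        refine eq_zero_of_notMem_square h hre him hR (pd_eq_zero hf j) _ fun hmem => hy ?_
        have ht' : dist (planeProj ζ (x + t • e)) (planeProj ζ x) < 1 := ht
        exact (dist_triangle _ (planeProj ζ (x + t • e)) _).trans (add_le_add hmem ht'.le)
      rw [this]
      simp [hy]
  · refine HasDerivAt.mul_const ?_ _
    have := hasDerivAt_line hs j (fun i => x i - y.1 * (ζ i).re - y.2 * (ζ i).im) t
    have he : ∀ t : ℝ, (fun i => (x + t • e) i - y.1 * (ζ i).re - y.2 * (ζ i).im) =
        (fun i => x i - y.1 * (ζ i).re - y.2 * (ζ i).im) + t • Pi.single j 1 := by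
      intro t
      funext i
      simp only [Pi.add_apply, e]
      ring
    simp only [he]
    exact this

/-! ### The equation `ζ·∇Φ = f` -/

/-- **Cauchy–Pompeiu formula** for compactly supported functions on the plane. In polar
coordinates the integrand is `∂_r g + (i / r) ∂_θ g`; the first term integrates to `-g 0` along
every ray, the second to `0` along every circle. -/
lemma integral_dbar_mul_cauchyKernel {g : ℝ × ℝ → ℂ} (hg : ContDiff ℝ (⊤ : ℕ∞) g)
    (hc : HasCompactSupport g) :
    ∫ y, (fderiv ℝ g y (1, 0) + Complex.I * fderiv ℝ g y (0, 1)) * cauchyKernel y =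
      -(2 * Real.pi) * g 0 := by
  let P : ℝ → ℝ → ℝ × ℝ := fun r θ => (r * Real.cos θ, r * Real.sin θ)
  let A : ℝ × ℝ → ℂ := fun p => fderiv ℝ g (P p.1 p.2) (Real.cos p.2, Real.sin p.2)
  let B : ℝ × ℝ → ℂ := fun p => fderiv ℝ g (P p.1 p.2) (-Real.sin p.2, Real.cos p.2)
  have hd : ∀ y, HasFDerivAt g (fderiv ℝ g y) y :=
    fun y => (hg.differentiable (by simp) y).hasFDerivAt
  have hfc : Continuous (fderiv ℝ g) := hg.continuous_fderiv (by simp)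
  have hAc : Continuous A := (hfc.comp (by fun_prop)).clm_apply (by fun_prop)
  have hBc : Continuous B := (hfc.comp (by fun_prop)).clm_apply (by fun_prop)
  -- a radius beyond which `g` and its derivative vanish
  obtain ⟨M, hM⟩ := hc.isCompact.isBounded.subset_closedBall (0 : ℝ × ℝ)
  have hP : ∀ r θ, 2 * |M| < r → P r θ ∉ tsupport g := by
    intro r θ hr hmem
    have h1 := hM hmem
    rw [mem_closedBall_zero_iff, Prod.norm_def, max_le_iff, Real.norm_eq_abs,
      Real.norm_eq_abs] at h1
    have h2 : (P r θ).1 ^ 2 ≤ M ^ 2 := sq_le_sq.2 (h1.1.trans (le_abs_self M))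
    have h3 : (P r θ).2 ^ 2 ≤ M ^ 2 := sq_le_sq.2 (h1.2.trans (le_abs_self M))
    have h4 : (P r θ).1 ^ 2 + (P r θ).2 ^ 2 = r ^ 2 := by
      simp only [P]
      nlinarith [Real.sin_sq_add_cos_sq θ]
    have h5 := abs_nonneg M
    have h6 := sq_abs M
    nlinarith
  have hfz : ∀ r θ, 2 * |M| < r → fderiv ℝ g (P r θ) = 0 := fun r θ hr =>
    image_eq_zero_of_notMem_tsupport fun hmem => hP r θ hr (tsupport_fderiv_subset ℝ hmem)
  have hgz : ∀ r θ, 2 * |M| < r → g (P r θ) = 0 := fun r θ hr =>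
    image_eq_zero_of_notMem_tsupport (hP r θ hr)
  have hint : ∀ G : ℝ × ℝ → ℂ, Continuous G → (∀ r θ, 2 * |M| < r → G (r, θ) = 0) →
      IntegrableOn G (Set.Ioi 0 ×ˢ Set.Ioo (-Real.pi) Real.pi) := by
    intro G hG hz
    have hK : IntegrableOn G (Set.Icc 0 (2 * |M|) ×ˢ Set.Icc (-Real.pi) Real.pi) :=
      hG.continuousOn.integrableOn_compact (isCompact_Icc.prod isCompact_Icc)
    refine hK.of_forall_sdiff_eq_zero (measurableSet_Ioi.prod measurableSet_Ioo) ?_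
    rintro ⟨r, θ⟩ ⟨⟨hr, hθ⟩, hn⟩
    refine hz r θ (not_le.1 fun hle => hn ⟨⟨le_of_lt hr, hle⟩, Set.Ioo_subset_Icc_self hθ⟩)
  have hAi := hint A hAc fun r θ hr => by simp [A, hfz r θ hr]
  have hBi := hint B hBc fun r θ hr => by simp [B, hfz r θ hr]
  have hAint : ∫ p in Set.Ioi 0 ×ˢ Set.Ioo (-Real.pi) Real.pi, A p = -(2 * Real.pi) * g 0 := by
    have hray : ∀ θ, ∫ r in Set.Ioi (0 : ℝ), A (r, θ) = -g 0 := by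
      intro θ
      have hder : ∀ r ∈ Set.Ici (0 : ℝ), HasDerivAt (fun r => g (P r θ)) (A (r, θ)) r := by
        intro r _
        have h1 : HasDerivAt (fun r => P r θ) (Real.cos θ, Real.sin θ) r := by
          simpa using ((hasDerivAt_id r).mul_const (Real.cos θ)).prodMk
            ((hasDerivAt_id r).mul_const (Real.sin θ))
        exact (hd _).comp_hasDerivAt r h1
      have hi : IntegrableOn (fun r => A (r, θ)) (Set.Ioi 0) := by
        have hK : IntegrableOn (fun r => A (r, θ)) (Set.Icc 0 (2 * |M|)) :=
          (hAc.comp (by fun_prop)).continuousOn.integrableOn_compact isCompact_Icc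
        refine hK.of_forall_sdiff_eq_zero measurableSet_Ioi ?_
        rintro r ⟨hr, hn⟩
        have : 2 * |M| < r := not_le.1 fun hle => hn ⟨le_of_lt hr, hle⟩
        simp [A, hfz r θ this]
      have hlim : Tendsto (fun r => g (P r θ)) atTop (𝓝 0) := by
        refine tendsto_const_nhds.congr' ?_
        filter_upwards [eventually_gt_atTop (2 * |M|)] with r hr using (hgz r θ hr).symm
      rw [integral_Ioi_of_hasDerivAt_of_tendsto' hder hi hlim]
      simp only [P, zero_mul, zero_sub]
      rfl
    rw [Measure.volume_eq_prod, ← Measure.prod_restrict, integral_prod_symm]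
    · simp only [hray, integral_const, smul_neg, measureReal_restrict_apply_univ,
        Real.volume_real_Ioo_of_le (by linarith [Real.pi_pos] : -Real.pi ≤ Real.pi)]
      rw [Complex.real_smul]
      push_cast
      ring
    · rw [Measure.prod_restrict]
      exact hAi
  have hBint : ∫ p in Set.Ioi 0 ×ˢ Set.Ioo (-Real.pi) Real.pi, B p = 0 := by
    rw [Measure.volume_eq_prod, setIntegral_prod _ hBi]
    refine setIntegral_eq_zero_of_forall_eq_zero fun r hr => ?_
    have hr' : (r : ℂ) ≠ 0 := Complex.ofReal_ne_zero.2 (ne_of_gt hr)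
    have hder : ∀ θ, HasDerivAt (fun θ => g (P r θ)) (r * B (r, θ)) θ := by
      intro θ
      have h1 : HasDerivAt (fun θ => P r θ) (r • (-Real.sin θ, Real.cos θ)) θ := by
        simpa using ((Real.hasDerivAt_cos θ).const_mul r).prodMk
          ((Real.hasDerivAt_sin θ).const_mul r)
      have h2 := (hd _).comp_hasDerivAt θ h1
      rw [map_smul, Complex.real_smul] at h2
      exact h2
    have hcir := intervalIntegral.integral_eq_sub_of_hasDerivAt (a := -Real.pi) (b := Real.pi)
      (fun θ _ => hder θ) ((continuous_const.mul (hBc.comp (by fun_prop))).intervalIntegrable _ _)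
    have hper : g (P r Real.pi) - g (P r (-Real.pi)) = 0 := by simp [P]
    rw [hper, intervalIntegral.integral_const_mul,
      intervalIntegral.integral_of_le (by linarith [Real.pi_pos]), integral_Ioc_eq_integral_Ioo]
      at hcir
    exact (mul_eq_zero.1 hcir).resolve_left hr'
  rw [← integral_comp_polarCoord_symm, polarCoord_target]
  have hpt : ∀ p ∈ Set.Ioi (0 : ℝ) ×ˢ Set.Ioo (-Real.pi) Real.pi,
      p.1 • ((fderiv ℝ g (polarCoord.symm p) (1, 0) +
        Complex.I * fderiv ℝ g (polarCoord.symm p) (0, 1)) * cauchyKernel (polarCoord.symm p)) =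
      A p + Complex.I * B p := by
    rintro ⟨r, θ⟩ ⟨hr, -⟩
    have hr' : (r : ℂ) ≠ 0 := Complex.ofReal_ne_zero.2 (ne_of_gt hr)
    have hlin : ∀ u v : ℝ, fderiv ℝ g (P r θ) (u, v) =
        u * fderiv ℝ g (P r θ) (1, 0) + v * fderiv ℝ g (P r θ) (0, 1) := by
      intro u v
      have : ((u, v) : ℝ × ℝ) = u • ((1, 0) : ℝ × ℝ) + v • ((0, 1) : ℝ × ℝ) := by simp
      rw [this, map_add, map_smul, map_smul, Complex.real_smul, Complex.real_smul]
    have hK : cauchyKernel (P r θ) =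
        (r : ℂ)⁻¹ * (Complex.cos θ - Complex.sin θ * Complex.I) := by
      rw [cauchyKernel]
      refine inv_eq_of_mul_eq_one_right ?_
      simp only [P]
      push_cast
      have h1 := Complex.sin_sq_add_cos_sq (θ : ℂ)
      field_simp
      linear_combination h1 - Complex.sin θ ^ 2 * Complex.I_sq
    have hsymm : polarCoord.symm (r, θ) = P r θ := rfl
    simp only [hsymm, A, B]
    rw [hlin (Real.cos θ), hlin (-Real.sin θ), hK, Complex.real_smul]
    push_cast
    field_simp
    linear_combination (-Complex.sin θ * fderiv ℝ g (P r θ) (0, 1)) * Complex.I_sq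
  rw [setIntegral_congr_fun (measurableSet_Ioi.prod measurableSet_Ioo) hpt,
    integral_add hAi (hBi.const_mul _), integral_const_mul, hAint, hBint, mul_zero, add_zero]

lemma fderiv_eq_sum_pd {n : ℕ} (f : (Fin n → ℝ) → ℂ) (x v : Fin n → ℝ) :
    fderiv ℝ f x v = ∑ i, (v i : ℂ) * pd f i x := by
  conv_lhs => rw [pi_eq_sum_univ' v, map_sum]
  refine Finset.sum_congr rfl fun i _ => ?_
  rw [map_smul, Complex.real_smul, pd]

/-- `ζ·∇` inverts `Ninv ζ`: along the plane through `x`, the function `ζ·∇f` is `-(∂₁ + i∂₂)` of the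
slice of `f`, so that the Cauchy–Pompeiu formula applies. -/
lemma sum_mul_pd_Ninv {n : ℕ} {ζ : Fin n → ℂ} (h : (∑ i, ζ i * ζ i) = 0)
    (hre : (∑ i, (ζ i).re ^ 2) = 1) (him : (∑ i, (ζ i).im ^ 2) = 1)
    {R : ℝ} (hR : 0 < R) {f : (Fin n → ℝ) → ℂ} (hs : ContDiff ℝ (⊤ : ℕ∞) f)
    (hc : HasCompactSupport f)
    (hf : ∀ x : Fin n → ℝ, R ^ 2 < ∑ i, x i ^ 2 → f x = 0) (x : Fin n → ℝ) :
    (∑ i, ζ i * pd (Ninv ζ f) i x) = f x := by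
  let L : ℝ × ℝ → (Fin n → ℝ) := fun y i => x i - y.1 * (ζ i).re - y.2 * (ζ i).im
  let g : ℝ × ℝ → ℂ := fun y => f (L y)
  have hL : ContDiff ℝ (⊤ : ℕ∞) L := by
    rw [contDiff_pi]
    intro i
    simp only [L]
    fun_prop
  have hg : ContDiff ℝ (⊤ : ℕ∞) g := hs.comp hL
  have hgc : HasCompactSupport g := HasCompactSupport.intro
    (isCompact_closedBall (planeProj ζ x) R)
    fun y hy => eq_zero_of_notMem_square h hre him hR hf x hy
  have hLd : ∀ y v : ℝ × ℝ,
      fderiv ℝ L y v = fun i => -(v.1 * (ζ i).re) - v.2 * (ζ i).im := by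
    intro y v
    have : HasFDerivAt L (ContinuousLinearMap.pi fun i =>
        (0 - (ContinuousLinearMap.fst ℝ ℝ ℝ).smulRight (ζ i).re) -
          (ContinuousLinearMap.snd ℝ ℝ ℝ).smulRight (ζ i).im) y := by
      rw [hasFDerivAt_pi]
      intro i
      exact ((hasFDerivAt_const _ _).sub (((ContinuousLinearMap.fst ℝ ℝ ℝ).smulRight
        (ζ i).re).hasFDerivAt)).sub
          (((ContinuousLinearMap.snd ℝ ℝ ℝ).smulRight (ζ i).im).hasFDerivAt)
    rw [this.fderiv]
    funext i
    simp
  have hgd : ∀ y v, fderiv ℝ g y v =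
      ∑ i, ((-(v.1 * (ζ i).re) - v.2 * (ζ i).im : ℝ) : ℂ) * pd f i (L y) := by
    intro y v
    have : fderiv ℝ g y = (fderiv ℝ f (L y)).comp (fderiv ℝ L y) :=
      fderiv_comp y (hs.differentiable (by simp) _) (hL.differentiable (by simp) _)
    rw [this, ContinuousLinearMap.comp_apply, hLd, fderiv_eq_sum_pd]
  have hdbar : ∀ y, ∑ i, ζ i * (pd f i (L y) * cauchyKernel y) =
      -((fderiv ℝ g y (1, 0) + Complex.I * fderiv ℝ g y (0, 1)) * cauchyKernel y) := by
    intro y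
    rw [hgd, hgd, Finset.mul_sum, ← Finset.sum_add_distrib, Finset.sum_mul,
      ← Finset.sum_neg_distrib]
    refine Finset.sum_congr rfl fun i _ => ?_
    conv_lhs => rw [← Complex.re_add_im (ζ i)]
    push_cast
    ring
  have hi : ∀ i, Integrable (fun y => ζ i * (pd f i (L y) * cauchyKernel y)) := fun i =>
    (integrable_slice h hre him hR (contDiff_pd hs i).continuous (pd_eq_zero hf i) x).const_mul _
  have hg0 : g 0 = f x := by simp [g, L]
  calc (∑ i, ζ i * pd (Ninv ζ f) i x)
      = (1 / (2 * Real.pi)) * ∑ i, ∫ y, ζ i * (pd f i (L y) * cauchyKernel y) := by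
        rw [Finset.mul_sum]
        refine Finset.sum_congr rfl fun i _ => ?_
        rw [pd_Ninv h hre him hR hs hc hf, Ninv_eq, integral_const_mul]
        ring
    _ = f x := by
        rw [← integral_finsetSum _ fun i _ => hi i]
        simp only [hdbar]
        rw [integral_neg, integral_dbar_mul_cauchyKernel hg hgc, hg0]
        have : (Real.pi : ℂ) ≠ 0 := Complex.ofReal_ne_zero.2 Real.pi_ne_zero
        field_simp

/-! ### Higher derivatives -/

lemma pdIter_Ninv {n : ℕ} {ζ : Fin n → ℂ} (h : (∑ i, ζ i * ζ i) = 0)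
    (hre : (∑ i, (ζ i).re ^ 2) = 1) (him : (∑ i, (ζ i).im ^ 2) = 1)
    {R : ℝ} (hR : 0 < R) (l : List (Fin n)) : ∀ {f : (Fin n → ℝ) → ℂ},
    ContDiff ℝ (⊤ : ℕ∞) f → HasCompactSupport f →
    (∀ x : Fin n → ℝ, R ^ 2 < ∑ i, x i ^ 2 → f x = 0) →
    pdIter l (Ninv ζ f) = Ninv ζ (pdIter l f) := by
  induction l with
  | nil => intro f _ _ _; rfl
  | cons j l ih =>
    intro f hs hc hf
    simp only [pdIter]
    rw [← ih (contDiff_pd hs j) (hasCompactSupport_pd hc j) (pd_eq_zero hf j)]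
    congr 1
    funext x
    exact pd_Ninv h hre him hR hs hc hf j x

lemma pdIter_eq_zero {n : ℕ} {R : ℝ} (l : List (Fin n)) : ∀ {f : (Fin n → ℝ) → ℂ},
    (∀ x : Fin n → ℝ, R ^ 2 < ∑ i, x i ^ 2 → f x = 0) →
    ∀ x : Fin n → ℝ, R ^ 2 < ∑ i, x i ^ 2 → pdIter l f x = 0 := by
  induction l with
  | nil => exact fun hf => hf
  | cons j l ih => exact fun hf => ih (pd_eq_zero hf j)

theorem stmt_2 (n : ℕ) (hn : 2 ≤ n) (R : ℝ) (hR : 0 < R) :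
    ∃ C : ℝ, ∀ ζ : Fin n → ℂ,
      (∑ i, ζ i * ζ i) = 0 → (∑ i, (ζ i).re ^ 2) = 1 → (∑ i, (ζ i).im ^ 2) = 1 →
      ∀ f : (Fin n → ℝ) → ℂ, ContDiff ℝ (⊤ : ℕ∞) f → HasCompactSupport f →
        -- supp f ⊂ B(0, R)
        (∀ x : Fin n → ℝ, R ^ 2 ≤ ∑ i, x i ^ 2 → f x = 0) →
          -- Φ = N_{ζ₀}⁻¹ f is C^∞
          ContDiff ℝ (⊤ : ℕ∞) (Ninv ζ f) ∧
          -- ∂^α Φ = N_{ζ₀}⁻¹ (∂^α f) for every multi-index α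
          (∀ l : List (Fin n), ∀ x, pdIter l (Ninv ζ f) x = Ninv ζ (pdIter l f) x) ∧
          -- ζ₀·∇Φ = f everywhere
          (∀ x, (∑ i, ζ i * pd (Ninv ζ f) i x) = f x) ∧
          -- max_{|α| ≤ k} sup |∂^α Φ| ≤ C max_{|α| ≤ k} sup |∂^α f|,
          -- with C = C(R) independent of f, ζ and k
          (∀ (k : ℕ) (D : ℝ),
            (∀ l : List (Fin n), l.length ≤ k → ∀ x, ‖pdIter l f x‖ ≤ D) →
            (∀ l : List (Fin n), l.length ≤ k → ∀ x, ‖pdIter l (Ninv ζ f) x‖ ≤ C * D)) := by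
  refine ⟨cauchyConst R, fun ζ h hre him f hs hc hf' => ?_⟩
  have hf : ∀ x : Fin n → ℝ, R ^ 2 < ∑ i, x i ^ 2 → f x = 0 := fun x hx => hf' x hx.le
  refine ⟨contDiff_Ninv h hre him hR hs hf, fun l x => ?_,
    sum_mul_pd_Ninv h hre him hR hs hc hf, fun k D hD l hl x => ?_⟩
  · rw [pdIter_Ninv h hre him hR l hs hc hf]
  · rw [pdIter_Ninv h hre him hR l hs hc hf]
    exact norm_Ninv_le h hre him hR (pdIter_eq_zero l hf) (hD l hl) x
end

section
/- Let n ≥ 2 and −1 < δ < 0. There exists a constant C > 0, depending only on n and δ, such that for every ζ₀ ∈ ℂⁿ with ζ₀·ζ₀ = 0 and |Re ζ₀| = |Im ζ₀| = 1, and every continuous compactly supported f : ℝⁿ → ℂ, one has ∫_{ℝⁿ} (1 + |x|²)^δ |(N_{ζ₀}⁻¹ f)(x)|² dx ≤ C² ∫_{ℝⁿ} (1 + |x|²)^{δ+1} |f(x)|² dx. -/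
/-!
Taking absolute values in the kernel, `|N⁻¹ f (x)|` is at most `∫ |f (x - y₁ a - y₂ b)| / |y| dy`, where
`a = Re ζ` and `b = Im ζ` are orthonormal because `ζ · ζ = 0`. The claim for this positive operator
follows from the Schur test with powers of the weight `W x = 1 + |x|²` (lemma `schur`).

The analytic input is `exists_kernel_bound`: for `1 / 2 < p < 1`,
`∫ W (x - y₁ a - y₂ b) ^ (-p) / |y| dy ≤ A W(x) ^ (1 / 2 - p)`, with `A` depending on `p` only. It
holds since the weight is bounded below by the squares of both `|y - u|`, with `u` the projection of
`x` to the plane of `a, b`, and of `√(W x) - |y|` (`W_shift_ge`); this majorises the integrand by three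
radial power functions (`kernel_pointwise`), which are integrated in polar coordinates
(`lintegral_near`, `lintegral_far`).

Cauchy–Schwarz with the weights `W ^ (∓p)`, `p = 1 + δ / 2`, bounds `|N⁻¹ f (x)|²` by
`A W(x) ^ (1 / 2 - p) ∫ |f|² W ^ p (x - y₁ a - y₂ b) / |y| dy`. After multiplication by `W ^ δ`,
integration in `x` and Tonelli, a second use of the kernel bound with `q = 1 / 2 - δ / 2` gives the
weight `W ^ (p + 1 / 2 - q) = W ^ (δ + 1)`. Both `p` and `q` lie in `(1 / 2, 1)` exactly because
`-1 < δ < 0`. The argument runs on `[0, ∞]`-valued integrals, so integrability of the left-hand side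
plays no role.
-/

open MeasureTheory Filter Topology

open scoped ENNReal

/-! ### Radial integrals in the plane -/

/-- Euclidean length on `ℝ × ℝ`, whose Mathlib norm is the sup norm. -/
noncomputable def rho (y : ℝ × ℝ) : ℝ := √(y.1 ^ 2 + y.2 ^ 2)

lemma measurable_rho : Measurable rho := by unfold rho; fun_prop

lemma rho_nonneg (y : ℝ × ℝ) : 0 ≤ rho y := Real.sqrt_nonneg _

lemma rho_sq (y : ℝ × ℝ) : rho y ^ 2 = y.1 ^ 2 + y.2 ^ 2 := Real.sq_sqrt (by positivity)

lemma lintegral_radial (φ : ℝ → ℝ≥0∞) (hφ : Measurable φ) :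
    ∫⁻ y : ℝ × ℝ, φ (rho y) =
      ENNReal.ofReal (2 * Real.pi) * ∫⁻ r in Set.Ioi (0 : ℝ), ENNReal.ofReal r * φ r := by
  rw [← lintegral_comp_polarCoord_symm]
  have h1 : ∀ p ∈ polarCoord.target, ENNReal.ofReal p.1 • φ (rho (polarCoord.symm p)) =
      (ENNReal.ofReal p.1 * φ p.1) * (1 : ℝ≥0∞) := by
    rintro ⟨r, θ⟩ hp
    have hr : 0 < r := hp.1
    have : rho (polarCoord.symm (r, θ)) = r := by
      simp only [rho, polarCoord_symm_apply]
      rw [show (r * Real.cos θ) ^ 2 + (r * Real.sin θ) ^ 2 = r ^ 2 by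
        linear_combination r ^ 2 * Real.cos_sq_add_sin_sq θ]
      exact Real.sqrt_sq hr.le
    rw [this, mul_one, smul_eq_mul]
  rw [setLIntegral_congr_fun polarCoord.open_target.measurableSet h1, polarCoord_target,
    Measure.volume_eq_prod, ← Measure.prod_restrict,
    lintegral_prod_mul (f := fun r => ENNReal.ofReal r * φ r) (g := fun _ => 1)
      (by fun_prop) (by fun_prop)]
  simp only [lintegral_const, one_mul, Measure.restrict_apply MeasurableSet.univ, Set.univ_inter,
    Real.volume_Ioo]
  rw [mul_comm]
  congr 2
  ring

lemma lintegral_near (a R : ℝ) (ha : -2 < a) (hR : 0 < R) :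
    ∫⁻ y : ℝ × ℝ, (if rho y < R then ENNReal.ofReal (rho y ^ a) else 0) =
      ENNReal.ofReal (2 * Real.pi / (a + 2) * R ^ (a + 2)) := by
  rw [lintegral_radial (fun r => if r < R then ENNReal.ofReal (r ^ a) else 0)
    (Measurable.ite measurableSet_Iio (by fun_prop) (by fun_prop))]
  have h1 : ∀ r ∈ Set.Ioi (0 : ℝ), ENNReal.ofReal r * (if r < R then ENNReal.ofReal (r ^ a) else 0)
      = (Set.Iio R).indicator (fun r => ENNReal.ofReal (r ^ (a + 1))) r := by
    intro r hr
    have hr : 0 < r := hr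
    by_cases h : r < R
    · simp only [h, if_true, Set.mem_Iio, Set.indicator_of_mem]
      rw [← ENNReal.ofReal_mul hr.le, Real.rpow_add_one hr.ne', mul_comm]
    · simp [h]
  rw [setLIntegral_congr_fun measurableSet_Ioi h1, lintegral_indicator measurableSet_Iio,
    Measure.restrict_restrict measurableSet_Iio, Set.Iio_inter_Ioi]
  have hi : IntegrableOn (fun r : ℝ => r ^ (a + 1)) (Set.Ioo 0 R) :=
    (intervalIntegral.integrableOn_Ioo_rpow_iff hR).2 (by linarith)
  rw [← ofReal_integral_eq_lintegral_ofReal hi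
    ((ae_restrict_iff' measurableSet_Ioo).2 (.of_forall fun r hr => Real.rpow_nonneg hr.1.le _)),
    ← integral_Ioc_eq_integral_Ioo, ← intervalIntegral.integral_of_le hR.le,
    integral_rpow (Or.inl (by linarith)), ← ENNReal.ofReal_mul (by positivity),
    Real.zero_rpow (by linarith)]
  congr 1
  rw [show a + 1 + 1 = a + 2 by ring]
  ring

lemma lintegral_far (a R : ℝ) (ha : a < -2) (hR : 0 < R) :
    ∫⁻ y : ℝ × ℝ, (if R < rho y then ENNReal.ofReal (rho y ^ a) else 0) =
      ENNReal.ofReal (2 * Real.pi / (-(a + 2)) * R ^ (a + 2)) := by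
  rw [lintegral_radial (fun r => if R < r then ENNReal.ofReal (r ^ a) else 0)
    (Measurable.ite measurableSet_Ioi (by fun_prop) (by fun_prop))]
  have h1 : ∀ r ∈ Set.Ioi (0 : ℝ), ENNReal.ofReal r * (if R < r then ENNReal.ofReal (r ^ a) else 0)
      = (Set.Ioi R).indicator (fun r => ENNReal.ofReal (r ^ (a + 1))) r := by
    intro r hr
    have hr : 0 < r := hr
    by_cases h : R < r
    · simp only [h, if_true, Set.mem_Ioi, Set.indicator_of_mem]
      rw [← ENNReal.ofReal_mul hr.le, Real.rpow_add_one hr.ne', mul_comm]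
    · simp [h]
  rw [setLIntegral_congr_fun measurableSet_Ioi h1, lintegral_indicator measurableSet_Ioi,
    Measure.restrict_restrict measurableSet_Ioi, Set.Ioi_inter_Ioi, sup_eq_left.2 hR.le]
  rw [← ofReal_integral_eq_lintegral_ofReal (integrableOn_Ioi_rpow_of_lt (by linarith) hR)
    ((ae_restrict_iff' measurableSet_Ioi).2
      (.of_forall fun r hr => Real.rpow_nonneg (hR.trans hr).le _)),
    integral_Ioi_rpow_of_lt (by linarith) hR, ← ENNReal.ofReal_mul (by positivity)]
  congr 1
  rw [show a + 1 + 1 = a + 2 by ring, neg_div, div_neg]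
  ring

/-! ### The weight along a translated plane -/

/-- The point `x - y₁ a - y₂ b` at which `N⁻¹` samples its argument. -/
def shift {n : ℕ} (a b x : Fin n → ℝ) (y : ℝ × ℝ) : Fin n → ℝ :=
  fun i => x i - y.1 * a i - y.2 * b i

/-- The weight `1 + |x|²`, with `|x|` the Euclidean length. -/
def W {n : ℕ} (x : Fin n → ℝ) : ℝ := 1 + ∑ i, x i ^ 2

lemma one_le_W {n : ℕ} (x : Fin n → ℝ) : 1 ≤ W x :=
  le_add_of_nonneg_right (Finset.sum_nonneg fun _ _ => sq_nonneg _)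

lemma W_pos {n : ℕ} (x : Fin n → ℝ) : 0 < W x := one_pos.trans_le (one_le_W x)

lemma W_shift {n : ℕ} {a b : Fin n → ℝ} (ha : ∑ i, a i ^ 2 = 1) (hb : ∑ i, b i ^ 2 = 1)
    (hab : ∑ i, a i * b i = 0) (x : Fin n → ℝ) (y : ℝ × ℝ) :
    W (shift a b x y) =
      W x - 2 * (y.1 * ∑ i, x i * a i + y.2 * ∑ i, x i * b i) + (y.1 ^ 2 + y.2 ^ 2) := by
  have : ∀ i, (shift a b x y i) ^ 2 = x i ^ 2 - 2 * (y.1 * (x i * a i) + y.2 * (x i * b i))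
      + (y.1 ^ 2 * a i ^ 2 + y.2 ^ 2 * b i ^ 2) + 2 * y.1 * y.2 * (a i * b i) := by
    intro i; simp only [shift]; ring
  simp only [W, this, Finset.sum_add_distrib, Finset.sum_sub_distrib, ← Finset.mul_sum, ha, hb, hab]
  ring

/-- In the Euclidean space `ℝ × ℝⁿ`, `√(W x)` is the length of `(1, x)`. Hence `√(W (shift a b x y))`
is at least the distance of `y` from the projection of `x` to the plane of `a` and `b`, and, by the
triangle inequality, at least `|√(W x) - |y||`. -/
lemma W_shift_ge {n : ℕ} {a b : Fin n → ℝ} (ha : ∑ i, a i ^ 2 = 1) (hb : ∑ i, b i ^ 2 = 1)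
    (hab : ∑ i, a i * b i = 0) (x : Fin n → ℝ) (y : ℝ × ℝ) :
    rho (y - (∑ i, x i * a i, ∑ i, x i * b i)) ^ 2 ≤ W (shift a b x y) ∧
      (√(W x) - rho y) ^ 2 ≤ W (shift a b x y) := by
  -- at `y = (u, v)` this says `|(u, v)|² ≤ W x - 1`, which is Bessel's inequality
  have h0 := one_le_W (shift a b x (∑ i, x i * a i, ∑ i, x i * b i))
  rw [W_shift ha hb hab] at h0 ⊢
  generalize (∑ i, x i * a i) = u at *
  generalize (∑ i, x i * b i) = v at *
  have hW := Real.sq_sqrt (W_pos x).le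
  have hy := rho_sq y
  constructor
  · rw [rho_sq]
    simp only [Prod.fst_sub, Prod.snd_sub]
    nlinarith
  · have : y.1 * u + y.2 * v ≤ √(W x) * rho y := by
      apply le_of_sq_le_sq _ (by positivity [rho_nonneg y])
      rw [mul_pow, hW, hy]
      nlinarith [sq_nonneg (y.1 * v - y.2 * u), sq_nonneg y.1, sq_nonneg y.2]
    nlinarith

lemma rpow_neg_le {d w p : ℝ} (hd : 0 < d) (hw : d ^ 2 ≤ w) (hp : 0 ≤ p) :
    w ^ (-p) ≤ d ^ (-(2 * p)) := by
  calc w ^ (-p) ≤ (d ^ 2) ^ (-p) :=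
        Real.rpow_le_rpow_of_nonpos (by positivity) hw (by linarith)
    _ = d ^ (-(2 * p)) := by
        rw [← Real.rpow_natCast, ← Real.rpow_mul hd.le]; congr 1; push_cast; ring

/-- Three-region splitting of the potential kernel. With `R = √(W x)` and `u` the projection of `x`
to the plane of `a` and `b`: near `y = 0` the weight is comparable to `R ^ 2`, near `y = u` the factor
`1 / |y|` is comparable to `1 / R`, and elsewhere the weight is at least
`(|y| / 2) ^ 2`. The point `y = u` is
excluded because `0 ^ (-(2 * p)) = 0` in `ℝ`. -/
lemma kernel_pointwise {n : ℕ} {a b : Fin n → ℝ} (ha : ∑ i, a i ^ 2 = 1)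
    (hb : ∑ i, b i ^ 2 = 1) (hab : ∑ i, a i * b i = 0) {p : ℝ} (hp : 0 ≤ p) (x : Fin n → ℝ)
    (y : ℝ × ℝ) (hy : y ≠ (∑ i, x i * a i, ∑ i, x i * b i)) :
    ENNReal.ofReal (rho y ^ (-1 : ℝ)) * ENNReal.ofReal (W (shift a b x y) ^ (-p)) ≤
      ENNReal.ofReal ((√(W x) / 2) ^ (-(2 * p))) *
          (if rho y < √(W x) / 2 then ENNReal.ofReal (rho y ^ (-1 : ℝ)) else 0) +
        ENNReal.ofReal (2 / √(W x)) *
          (if rho (y - (∑ i, x i * a i, ∑ i, x i * b i)) < √(W x) then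
            ENNReal.ofReal (rho (y - (∑ i, x i * a i, ∑ i, x i * b i)) ^ (-(2 * p))) else 0) +
        ENNReal.ofReal (2 ^ (2 * p)) *
          (if √(W x) / 4 < rho y then ENNReal.ofReal (rho y ^ (-1 - 2 * p)) else 0) := by
  obtain ⟨h1, h2⟩ := W_shift_ge ha hb hab x y
  have hd : 0 < rho (y - (∑ i, x i * a i, ∑ i, x i * b i)) := by
    refine Real.sqrt_pos.2 ?_
    by_contra! hcon
    apply hy
    have e1 := sq_nonneg (y - (∑ i, x i * a i, ∑ i, x i * b i)).1
    have e2 := sq_nonneg (y - (∑ i, x i * a i, ∑ i, x i * b i)).2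
    rw [← sub_eq_zero]
    exact Prod.ext (pow_eq_zero_iff two_ne_zero |>.1 (by linarith))
      (pow_eq_zero_iff two_ne_zero |>.1 (by linarith))
  have hR : 0 < √(W x) := Real.sqrt_pos.2 (W_pos x)
  have hr := rho_nonneg y
  generalize rho (y - (∑ i, x i * a i, ∑ i, x i * b i)) = d at *
  generalize W (shift a b x y) = w at *
  generalize √(W x) = R at *
  generalize rho y = r at *
  by_cases hc1 : r < R / 2
  · rw [if_pos hc1, add_assoc, mul_comm]
    refine le_add_right ?_
    gcongr
    exact rpow_neg_le (by positivity) (by nlinarith) hp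
  push Not at hc1
  have hr0 : 0 < r := by linarith
  by_cases hc2 : d < R
  · rw [if_pos hc2, add_right_comm]
    refine le_add_left ?_
    gcongr
    · rw [Real.rpow_neg_one, show 2 / R = (R / 2)⁻¹ by field_simp]
      exact inv_anti₀ (by positivity) hc1
    · exact rpow_neg_le hd h1 hp
  · push Not at hc2
    rw [if_pos (show R / 4 < r by linarith)]
    refine le_add_left ?_
    rw [← ENNReal.ofReal_mul (by positivity), ← ENNReal.ofReal_mul (by positivity)]
    apply ENNReal.ofReal_le_ofReal
    have h3 : (r / 2) ^ 2 ≤ w := by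
      -- the sum of the two lower bounds `R` and `|R - r|` for `√w` is at least `r`
      have hw : 0 ≤ w := (sq_nonneg d).trans h1
      have k1 : R ≤ √w := hc2.trans (Real.le_sqrt_of_sq_le h1)
      have k2 : |R - r| ≤ √w := Real.abs_le_sqrt h2
      have k3 := abs_le.1 k2
      rw [← Real.sq_sqrt hw]
      gcongr
      linarith
    have h4 := rpow_neg_le (by positivity) h3 hp
    calc r ^ (-1 : ℝ) * w ^ (-p) ≤ r ^ (-1 : ℝ) * (r / 2) ^ (-(2 * p)) := by gcongr
      _ = 2 ^ (2 * p) * r ^ (-1 - 2 * p) := by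
        rw [Real.div_rpow hr0.le (by norm_num), Real.rpow_neg (by norm_num : (0 : ℝ) ≤ 2),
          sub_eq_add_neg (-1 : ℝ), Real.rpow_add hr0]
        field_simp

/-- The Riesz potential, over the plane spanned by the orthonormal pair `a`, `b`, of a negative
power of the weight: one power of `|x|` is gained, with a constant depending on `p` only. The
condition `p < 1` is integrability at the foot of `x`, and `1 / 2 < p` integrability at infinity. -/
lemma exists_kernel_bound {p : ℝ} (hp1 : 1 / 2 < p) (hp2 : p < 1) :
    ∃ A : ℝ, 0 < A ∧ ∀ (n : ℕ) (a b : Fin n → ℝ), ∑ i, a i ^ 2 = 1 → ∑ i, b i ^ 2 = 1 →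
      ∑ i, a i * b i = 0 → ∀ x : Fin n → ℝ,
        ∫⁻ y, ENNReal.ofReal (rho y ^ (-1 : ℝ)) * ENNReal.ofReal (W (shift a b x y) ^ (-p)) ≤
          ENNReal.ofReal (A * W x ^ (1 / 2 - p)) := by
  have q1 : 0 < 2 - 2 * p := by linarith
  have q2 : 0 < 2 * p - 1 := by linarith
  have hpi := Real.pi_pos
  refine ⟨2 * Real.pi * (1 / 2) ^ (1 - 2 * p) + 2 * (2 * Real.pi / (2 - 2 * p)) +
    2 ^ (2 * p) * (2 * Real.pi / (2 * p - 1)) * (1 / 4) ^ (1 - 2 * p), by positivity, ?_⟩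
  intro n a b ha hb hab x
  have hR : 0 < √(W x) := Real.sqrt_pos.2 (W_pos x)
  have hWR : W x ^ (1 / 2 - p) = √(W x) ^ (1 - 2 * p) := by
    rw [Real.sqrt_eq_rpow, ← Real.rpow_mul (W_pos x).le]; congr 1; ring
  have hae : ∀ᵐ y : ℝ × ℝ, y ≠ (∑ i, x i * a i, ∑ i, x i * b i) :=
    compl_mem_ae_iff.2 (measure_singleton _)
  have hm := measurable_rho
  have m1 : ∀ c e : ℝ, Measurable
      fun y : ℝ × ℝ => if rho y < c then ENNReal.ofReal (rho y ^ e) else 0 := fun c e =>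
    Measurable.ite (measurableSet_lt hm measurable_const) (by fun_prop) (by fun_prop)
  have m2 : ∀ c e : ℝ, Measurable
      fun y : ℝ × ℝ => if c < rho y then ENNReal.ofReal (rho y ^ e) else 0 := fun c e =>
    Measurable.ite (measurableSet_lt measurable_const hm) (by fun_prop) (by fun_prop)
  refine (lintegral_mono_ae (hae.mono fun y hy =>
    kernel_pointwise ha hb hab (by linarith) x y hy)).trans ?_
  generalize hu : ((∑ i, x i * a i, ∑ i, x i * b i) : ℝ × ℝ) = u
  rw [hWR]
  generalize √(W x) = R at *
  have m3 : Measurable fun y : ℝ × ℝ =>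
      if rho (y - u) < R then ENNReal.ofReal (rho (y - u) ^ (-(2 * p))) else 0 :=
    (m1 R (-(2 * p))).comp (measurable_id.sub_const u)
  rw [lintegral_add_right _ ((m2 _ _).const_mul _), lintegral_add_right _ (m3.const_mul _),
    lintegral_const_mul _ (m1 _ _), lintegral_const_mul _ m3, lintegral_const_mul _ (m2 _ _),
    lintegral_sub_right_eq_self
      (fun y : ℝ × ℝ => if rho y < R then ENNReal.ofReal (rho y ^ (-(2 * p))) else 0) u,
    lintegral_near _ _ (by norm_num) (by positivity), lintegral_near _ _ (by linarith) hR,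
    lintegral_far _ _ (by linarith) (by positivity)]
  have r1 : 0 < -(2 * p) + 2 := by linarith
  have r2 : 0 < -(-1 - 2 * p + 2) := by linarith
  rw [← ENNReal.ofReal_mul (by positivity), ← ENNReal.ofReal_mul (by positivity),
    ← ENNReal.ofReal_mul (by positivity), ← ENNReal.ofReal_add (by positivity) (by positivity),
    ← ENNReal.ofReal_add (by positivity) (by positivity)]
  apply ENNReal.ofReal_le_ofReal
  apply le_of_eq
  have e1 : (R / 2) ^ (-(2 * p)) * (R / 2) ^ (-1 + 2 : ℝ) =
      R ^ (1 - 2 * p) * (1 / 2) ^ (1 - 2 * p) := by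
    rw [← Real.rpow_add (by positivity), ← Real.mul_rpow hR.le (by norm_num)]
    congr 1 <;> ring
  have e2 : 2 / R * R ^ (-(2 * p) + 2) = 2 * R ^ (1 - 2 * p) := by
    rw [show -(2 * p) + 2 = (1 - 2 * p) + 1 by ring, Real.rpow_add_one hR.ne']
    field_simp
  have e3 : (R / 4) ^ (-1 - 2 * p + 2) = R ^ (1 - 2 * p) * (1 / 4) ^ (1 - 2 * p) := by
    rw [← Real.mul_rpow hR.le (by norm_num)]
    congr 1 <;> ring
  rw [e3, show -(-1 - 2 * p + 2) = 2 * p - 1 by ring]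
  rw [show (-1 + 2 : ℝ) = 1 by norm_num] at e1 ⊢
  linear_combination (2 * Real.pi) * e1 + (2 * Real.pi / (-(2 * p) + 2)) * e2

/-- Cauchy–Schwarz for the lower Lebesgue integral. -/
lemma lintegral_mul_sq_le {α : Type*} [MeasurableSpace α] (μ : Measure α) {g h : α → ℝ≥0∞}
    (hg : AEMeasurable g μ) (hh : AEMeasurable h μ) :
    (∫⁻ y, g y * h y ∂μ) ^ 2 ≤ (∫⁻ y, g y ^ 2 ∂μ) * ∫⁻ y, h y ^ 2 ∂μ := by
  have := ENNReal.lintegral_mul_le_Lp_mul_Lq μ Real.HolderConjugate.two_two hg hh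
  simp only [Pi.mul_apply, ENNReal.rpow_two] at this
  calc _ ≤ _ := pow_le_pow_left' this 2
    _ = _ := by
      rw [mul_pow, ← ENNReal.rpow_natCast, ← ENNReal.rpow_natCast, ← ENNReal.rpow_mul,
        ← ENNReal.rpow_mul]
      norm_num

/-! ### The Schur test -/

/-- The measure `dy / |y|` on the plane. -/
noncomputable def rieszMeasure : Measure (ℝ × ℝ) :=
  volume.withDensity fun y => ENNReal.ofReal (rho y ^ (-1 : ℝ))

instance : SFinite rieszMeasure := by unfold rieszMeasure; infer_instance

lemma lintegral_rieszMeasure {g : ℝ × ℝ → ℝ≥0∞} (hg : Measurable g) :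
    ∫⁻ y, g y ∂rieszMeasure = ∫⁻ y, ENNReal.ofReal (rho y ^ (-1 : ℝ)) * g y := by
  have hm := measurable_rho
  rw [rieszMeasure, lintegral_withDensity_eq_lintegral_mul _ (by fun_prop) hg]
  rfl

@[fun_prop]
lemma measurable_W {n : ℕ} : Measurable (W : (Fin n → ℝ) → ℝ) := by unfold W; fun_prop

lemma measurable_shift {n : ℕ} (a b : Fin n → ℝ) :
    Measurable fun z : (Fin n → ℝ) × (ℝ × ℝ) => shift a b z.1 z.2 := by
  unfold shift; fun_prop

lemma enorm_Ninv_le {n : ℕ} (ζ : Fin n → ℂ) {f : (Fin n → ℝ) → ℂ} (hf : Continuous f)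
    (x : Fin n → ℝ) :
    ‖Ninv ζ f x‖ₑ ≤
      ∫⁻ y, ‖f (shift (fun i => (ζ i).re) (fun i => (ζ i).im) x y)‖ₑ ∂rieszMeasure := by
  have hm : Measurable (shift (fun i => (ζ i).re) (fun i => (ζ i).im) x) :=
    (measurable_shift _ _).comp measurable_prodMk_left
  rw [lintegral_rieszMeasure
    (g := fun y => ‖f (shift (fun i => (ζ i).re) (fun i => (ζ i).im) x y)‖ₑ)
    (hf.measurable.comp hm).enorm]
  have h1 : ‖(1 / (2 * Real.pi) : ℂ)‖ₑ ≤ 1 := by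
    rw [← ofReal_norm, ← ENNReal.ofReal_one]
    apply ENNReal.ofReal_le_ofReal
    have := Real.two_le_pi
    rw [norm_div, norm_mul, norm_one, Complex.norm_real, Real.norm_of_nonneg Real.pi_pos.le,
      div_le_one (by norm_num; linarith)]
    norm_num
    linarith
  rw [Ninv, enorm_mul]
  refine (mul_le_of_le_one_left' h1).trans ((enorm_integral_le_lintegral_enorm _).trans ?_)
  refine lintegral_mono fun y => le_of_eq ?_
  have h2 : ‖(y.1 : ℂ) + (y.2 : ℂ) * Complex.I‖ = rho y := by
    rw [Complex.norm_add_mul_I]; rfl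
  rw [← ofReal_norm, norm_div, h2, ← ofReal_norm,
    ← ENNReal.ofReal_mul (Real.rpow_nonneg (rho_nonneg y) _), Real.rpow_neg_one, div_eq_inv_mul]
  rfl

/-- `(1 + |x|²) ^ t`, valued in `[0, ∞]`. -/
noncomputable def wt {n : ℕ} (t : ℝ) (x : Fin n → ℝ) : ℝ≥0∞ := ENNReal.ofReal (W x ^ t)

lemma measurable_wt {n : ℕ} (t : ℝ) : Measurable (wt t : (Fin n → ℝ) → ℝ≥0∞) := by
  unfold wt; fun_prop

lemma wt_mul_wt {n : ℕ} (s t : ℝ) (x : Fin n → ℝ) : wt s x * wt t x = wt (s + t) x := by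
  unfold wt
  rw [← ENNReal.ofReal_mul (Real.rpow_nonneg (W_pos x).le _), ← Real.rpow_add (W_pos x)]

lemma exists_wt_bound {p : ℝ} (hp1 : 1 / 2 < p) (hp2 : p < 1) :
    ∃ A : ℝ, 0 < A ∧ ∀ (n : ℕ) (a b : Fin n → ℝ), ∑ i, a i ^ 2 = 1 → ∑ i, b i ^ 2 = 1 →
      ∑ i, a i * b i = 0 → ∀ x : Fin n → ℝ,
        ∫⁻ y, wt (-p) (shift a b x y) ∂rieszMeasure ≤ ENNReal.ofReal A * wt (1 / 2 - p) x := by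
  obtain ⟨A, hA, h⟩ := exists_kernel_bound hp1 hp2
  refine ⟨A, hA, fun n a b ha hb hab x => ?_⟩
  rw [lintegral_rieszMeasure (g := fun y => wt (-p) (shift a b x y)) ((measurable_wt _).comp
    ((measurable_shift a b).comp measurable_prodMk_left)), wt, ← ENNReal.ofReal_mul hA.le]
  exact h n a b ha hb hab x

/-- The weighted estimate for the operator `F ↦ ∫ F (x - y₁ a - y₂ b) / |y| dy`, by the Schur test
with power weights of exponents `1 + δ / 2` and `1 / 2 - δ / 2`. -/
lemma schur {δ : ℝ} (hδ₁ : -1 < δ) (hδ₂ : δ < 0) :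
    ∃ B : ℝ, 0 < B ∧ ∀ (n : ℕ) (a b : Fin n → ℝ), ∑ i, a i ^ 2 = 1 → ∑ i, b i ^ 2 = 1 →
      ∑ i, a i * b i = 0 → ∀ F : (Fin n → ℝ) → ℝ≥0∞, Measurable F →
        ∫⁻ x, wt δ x * (∫⁻ y, F (shift a b x y) ∂rieszMeasure) ^ 2 ≤
          ENNReal.ofReal B * ∫⁻ x, wt (δ + 1) x * F x ^ 2 := by
  -- `p = 1 + δ/2` and `q = 1/2 - δ/2` both lie in `(1/2, 1)`, and `p - q = δ + 1/2`
  obtain ⟨A, hA, hAb⟩ := exists_wt_bound (p := 1 + δ / 2) (by linarith) (by linarith)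
  obtain ⟨A', hA', hAb'⟩ := exists_wt_bound (p := 1 / 2 - δ / 2) (by linarith) (by linarith)
  refine ⟨A * A', by positivity, fun n a b ha hb hab F hF => ?_⟩
  have hs := measurable_shift a b
  have hsx : ∀ x, Measurable (shift a b x) := fun x => hs.comp measurable_prodMk_left
  have hsy : ∀ y, Measurable fun x => shift a b x y := fun y => hs.comp measurable_prodMk_right
  set G : (Fin n → ℝ) → ℝ≥0∞ := fun x => wt (1 + δ / 2) x * F x ^ 2 with hG
  have hGm : Measurable G := (measurable_wt _).mul (hF.pow_const 2)
  have hcs : ∀ x, (∫⁻ y, F (shift a b x y) ∂rieszMeasure) ^ 2 ≤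
      ENNReal.ofReal A * wt (1 / 2 - (1 + δ / 2)) x * ∫⁻ y, G (shift a b x y) ∂rieszMeasure := by
    intro x
    have e : ∀ y, F (shift a b x y) = wt (-(1 + δ / 2) / 2) (shift a b x y) *
        (wt ((1 + δ / 2) / 2) (shift a b x y) * F (shift a b x y)) := by
      intro y
      rw [← mul_assoc, wt_mul_wt, neg_div, neg_add_cancel]
      simp [wt]
    calc (∫⁻ y, F (shift a b x y) ∂rieszMeasure) ^ 2
        = (∫⁻ y, wt (-(1 + δ / 2) / 2) (shift a b x y) *
          (wt ((1 + δ / 2) / 2) (shift a b x y) * F (shift a b x y)) ∂rieszMeasure) ^ 2 := by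
          simp_rw [← e]
      _ ≤ _ := lintegral_mul_sq_le _ ((measurable_wt _).comp (hsx x)).aemeasurable
          (((measurable_wt _).mul hF).comp (hsx x)).aemeasurable
      _ = (∫⁻ y, wt (-(1 + δ / 2)) (shift a b x y) ∂rieszMeasure) *
          ∫⁻ y, G (shift a b x y) ∂rieszMeasure := by
          simp only [hG, mul_pow, pow_two (wt _ _), wt_mul_wt, add_halves]
      _ ≤ _ := by gcongr; exact hAb n a b ha hb hab x
  have hL : Measurable fun z : (Fin n → ℝ) × (ℝ × ℝ) =>
      wt (-(1 / 2 - δ / 2)) z.1 * G (shift a b z.1 z.2) :=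
    ((measurable_wt _).comp measurable_fst).mul (hGm.comp hs)
  have hsm : Measurable fun z : (Fin n → ℝ) × (ℝ × ℝ) => shift a b z.1 (-z.2) :=
    hs.comp (measurable_fst.prodMk measurable_snd.neg)
  have hL' : Measurable fun z : (Fin n → ℝ) × (ℝ × ℝ) =>
      wt (-(1 / 2 - δ / 2)) (shift a b z.1 (-z.2)) * G z.1 :=
    ((measurable_wt _).comp hsm).mul (hGm.comp measurable_fst)
  calc ∫⁻ x, wt δ x * (∫⁻ y, F (shift a b x y) ∂rieszMeasure) ^ 2
      ≤ ∫⁻ x, ENNReal.ofReal A * ∫⁻ y,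
          wt (-(1 / 2 - δ / 2)) x * G (shift a b x y) ∂rieszMeasure := by
        refine lintegral_mono fun x => ?_
        rw [lintegral_const_mul (f := fun y => G (shift a b x y)) _ (hGm.comp (hsx x))]
        calc _ ≤ _ := mul_le_mul_right (hcs x) (wt δ x)
          _ = ENNReal.ofReal A * ((wt δ x * wt (1 / 2 - (1 + δ / 2)) x) *
              ∫⁻ y, G (shift a b x y) ∂rieszMeasure) := by ring
          _ = _ := by rw [wt_mul_wt]; congr 4; ring
    _ = ENNReal.ofReal A * ∫⁻ y, (∫⁻ x,
          wt (-(1 / 2 - δ / 2)) x * G (shift a b x y)) ∂rieszMeasure := by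
        rw [lintegral_const_mul _ hL.lintegral_prod_right', lintegral_lintegral_swap hL.aemeasurable]
    _ = ENNReal.ofReal A * ∫⁻ y, (∫⁻ x,
          wt (-(1 / 2 - δ / 2)) (shift a b x (-y)) * G x) ∂rieszMeasure := by
        congr 1
        refine lintegral_congr fun y => ?_
        rw [← lintegral_sub_right_eq_self
          (fun x => wt (-(1 / 2 - δ / 2)) (shift a b x (-y)) * G x)
          (fun i => y.1 * a i + y.2 * b i)]
        refine lintegral_congr fun x => ?_
        congr 2 <;> ext i <;> simp only [shift, Pi.sub_apply, Prod.fst_neg, Prod.snd_neg] <;> ring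
    _ = ENNReal.ofReal A * ∫⁻ x, (∫⁻ y,
          wt (-(1 / 2 - δ / 2)) (shift a b x (-y)) ∂rieszMeasure) * G x := by
        rw [← lintegral_lintegral_swap hL'.aemeasurable]
        congr 1
        refine lintegral_congr fun x => ?_
        rw [lintegral_mul_const (f := fun y => wt (-(1 / 2 - δ / 2)) (shift a b x (-y))) _
          ((measurable_wt _).comp (hsm.comp measurable_prodMk_left))]
    _ ≤ ENNReal.ofReal A * ∫⁻ x,
          (ENNReal.ofReal A' * wt (1 / 2 - (1 / 2 - δ / 2)) x) * G x := by
        gcongr with x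
        have e : ∀ y, shift a b x (-y) = shift (-a) (-b) x y := by
          intro y; ext i; simp [shift]
        simp_rw [e]
        exact hAb' n (-a) (-b) (by simpa using ha) (by simpa using hb) (by simpa using hab) x
    _ = ENNReal.ofReal (A * A') * ∫⁻ x, wt (δ + 1) x * F x ^ 2 := by
        rw [ENNReal.ofReal_mul hA.le, mul_assoc, ← lintegral_const_mul (f := fun x => wt (δ + 1) x * F x ^ 2) _
          ((measurable_wt _).mul (hF.pow_const 2))]
        congr 1
        refine lintegral_congr fun x => ?_
        rw [hG, mul_assoc, ← mul_assoc (wt _ x), wt_mul_wt]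
        congr 3
        ring

theorem stmt_3 (n : ℕ) (hn : 2 ≤ n) (δ : ℝ) (hδ₁ : -1 < δ) (hδ₂ : δ < 0) :
    ∃ C : ℝ, 0 < C ∧ ∀ ζ : Fin n → ℂ,
      (∑ i, ζ i * ζ i) = 0 → (∑ i, (ζ i).re ^ 2) = 1 → (∑ i, (ζ i).im ^ 2) = 1 →
      ∀ f : (Fin n → ℝ) → ℂ, Continuous f → HasCompactSupport f →
        ∫ x : Fin n → ℝ, (1 + ∑ i, x i ^ 2) ^ δ * ‖Ninv ζ f x‖ ^ 2 ≤
          C ^ 2 * ∫ x : Fin n → ℝ, (1 + ∑ i, x i ^ 2) ^ (δ + 1) * ‖f x‖ ^ 2 := by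
  obtain ⟨B, hB, h⟩ := schur hδ₁ hδ₂
  refine ⟨√B, Real.sqrt_pos.2 hB, fun ζ hζ hre him f hf hfc => ?_⟩
  rw [Real.sq_sqrt hB.le]
  have hab : ∑ i, (ζ i).re * (ζ i).im = 0 := by
    have := congrArg Complex.im hζ
    simp only [Complex.im_sum, Complex.mul_im, Complex.zero_im, Finset.sum_add_distrib] at this
    have e : ∑ i, (ζ i).im * (ζ i).re = ∑ i, (ζ i).re * (ζ i).im :=
      Finset.sum_congr rfl fun _ _ => mul_comm _ _
    linarith
  have key := h n _ _ hre him hab (fun x => ‖f x‖ₑ) hf.measurable.enorm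
  have hconv : ∀ (t : ℝ) (z : ℂ) (x : Fin n → ℝ),
      ENNReal.ofReal ((1 + ∑ i, x i ^ 2) ^ t * ‖z‖ ^ 2) = wt t x * ‖z‖ₑ ^ 2 := by
    intro t z x
    have hx : 0 ≤ (1 + ∑ i, x i ^ 2) ^ t := Real.rpow_nonneg (W_pos x).le _
    rw [ENNReal.ofReal_mul hx, ENNReal.ofReal_pow (norm_nonneg _),
      ofReal_norm]
    rfl
  have hnn : ∀ (t : ℝ) (z : ℂ) (x : Fin n → ℝ), 0 ≤ (1 + ∑ i, x i ^ 2) ^ t * ‖z‖ ^ 2 :=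
    fun t z x => mul_nonneg (Real.rpow_nonneg (W_pos x).le _) (sq_nonneg _)
  have hint : Integrable fun x : Fin n → ℝ => (1 + ∑ i, x i ^ 2) ^ (δ + 1) * ‖f x‖ ^ 2 := by
    apply Continuous.integrable_of_hasCompactSupport
    · refine Continuous.mul (Continuous.rpow_const (by fun_prop) fun x => Or.inl (W_pos x).ne') ?_
      fun_prop
    · refine hfc.mono fun x hx hfx => hx ?_
      simp [hfx]
  refine (ENNReal.ofReal_le_ofReal_iff
    (mul_nonneg hB.le (integral_nonneg fun x => hnn _ _ x))).1 ?_
  calc _ ≤ ‖∫ x : Fin n → ℝ, (1 + ∑ i, x i ^ 2) ^ δ * ‖Ninv ζ f x‖ ^ 2‖ₑ :=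
        Real.ofReal_le_enorm _
    _ ≤ ∫⁻ x : Fin n → ℝ, ‖(1 + ∑ i, x i ^ 2) ^ δ * ‖Ninv ζ f x‖ ^ 2‖ₑ :=
        enorm_integral_le_lintegral_enorm _
    _ = ∫⁻ x : Fin n → ℝ, wt δ x * ‖Ninv ζ f x‖ₑ ^ 2 := by
        refine lintegral_congr fun x => ?_
        rw [Real.enorm_of_nonneg (hnn _ _ x), hconv]
    _ ≤ _ := lintegral_mono fun x => by
        gcongr
        exact enorm_Ninv_le ζ hf x
    _ ≤ _ := key
    _ = _ := by
        rw [ENNReal.ofReal_mul hB.le, ofReal_integral_eq_lintegral_ofReal hint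
          (.of_forall fun x => hnn _ _ x)]
        simp_rw [hconv]
end

section
/- Let n ≥ 3 and let A ∈ L¹(ℝⁿ; ℂⁿ). Define Â(ξ) = ∫_{ℝⁿ} A(x) e^{i x·ξ} dx (componentwise). Suppose that for every ξ ∈ ℝⁿ and every pair μ₁, μ₂ ∈ ℝⁿ with |μ₁| = |μ₂| = 1, μ₁·μ₂ = 0, μ₁·ξ = 0, and μ₂·ξ = 0, one has (μ₁ + iμ₂)·Â(ξ) = 0. Then for all ξ ∈ ℝⁿ and all indices 1 ≤ j, k ≤ n, ξ_j Â_k(ξ) = ξ_k Â_j(ξ). -/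
open MeasureTheory Filter Topology

/-!
Fix `ξ` and write `v` for the vector of Fourier integrals at `ξ`. Since `n ≥ 3`, every unit vector
`μ₁ ⊥ ξ` has a unit companion `μ₂` orthogonal to both `ξ` and `μ₁`. The hypothesis for `(μ₁, μ₂)`
and `(μ₁, -μ₂)`, added together, gives `μ₁ · v = 0`; by scaling, `w · v = 0` for every real
`w ⊥ ξ`. The vector `w = ξ_j e_k - ξ_k e_j` is orthogonal to `ξ`, and `w · v = 0` is the claimed
identity.
-/

theorem exists_smul_unit {n : ℕ} (w : Fin n → ℝ) (hw : w ≠ 0) :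
    ∃ c : ℝ, c ≠ 0 ∧ ∑ i, (c * w i) ^ 2 = 1 := by
  have hpos : 0 < ∑ i, w i ^ 2 := by
    obtain ⟨i, hi⟩ := Function.ne_iff.mp hw
    exact Finset.sum_pos' (fun i _ => sq_nonneg _) ⟨i, Finset.mem_univ i, by simpa using sq_pos_of_ne_zero hi⟩
  refine ⟨(√(∑ i, w i ^ 2))⁻¹, inv_ne_zero (Real.sqrt_pos.mpr hpos).ne', ?_⟩
  simp_rw [mul_pow]
  rw [← Finset.mul_sum, inv_pow, Real.sq_sqrt hpos.le, inv_mul_cancel₀ hpos.ne']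

/-- In dimension at least three, two vectors have a common unit normal. -/
theorem exists_unit_orthogonal {n : ℕ} (hn : 3 ≤ n) (a b : Fin n → ℝ) :
    ∃ u : Fin n → ℝ, ∑ i, u i ^ 2 = 1 ∧ ∑ i, a i * u i = 0 ∧ ∑ i, u i * b i = 0 := by
  have hker : LinearMap.ker (Matrix.mulVecLin (Matrix.of ![a, b])) ≠ ⊥ :=
    LinearMap.ker_ne_bot_of_finrank_lt (by simp; omega)
  obtain ⟨u, hu, hu0⟩ := Submodule.exists_mem_ne_zero_of_ne_bot hker
  have hu' : (Matrix.of ![a, b]).mulVec u = 0 := by simpa using hu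
  have ha : ∑ i, a i * u i = 0 := by
    simpa [Matrix.mulVec, dotProduct] using congrFun hu' 0
  have hb : ∑ i, b i * u i = 0 := by
    simpa [Matrix.mulVec, dotProduct] using congrFun hu' 1
  obtain ⟨c, -, hc⟩ := exists_smul_unit u hu0
  refine ⟨fun i => c * u i, hc, ?_, ?_⟩
  · simp_rw [mul_left_comm _ c]
    rw [← Finset.mul_sum, ha, mul_zero]
  · simp_rw [mul_assoc, mul_comm (u _)]
    rw [← Finset.mul_sum, hb, mul_zero]

/-- If `(μ₁ + iμ₂) · v = 0` for all orthonormal pairs `μ₁, μ₂ ⊥ ξ`, then `v` annihilates every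
real vector orthogonal to `ξ`. -/
theorem sum_mul_eq_zero_of_orthogonal {n : ℕ} (hn : 3 ≤ n) (ξ : Fin n → ℝ) (v : Fin n → ℂ)
    (h : ∀ μ₁ μ₂ : Fin n → ℝ,
      (∑ i, μ₁ i ^ 2) = 1 → (∑ i, μ₂ i ^ 2) = 1 →
      (∑ i, μ₁ i * μ₂ i) = 0 → (∑ i, μ₁ i * ξ i) = 0 → (∑ i, μ₂ i * ξ i) = 0 →
      (∑ k, ((μ₁ k : ℂ) + Complex.I * (μ₂ k : ℂ)) * v k) = 0)
    (w : Fin n → ℝ) (hw : ∑ i, w i * ξ i = 0) : ∑ k, (w k : ℂ) * v k = 0 := by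
  rcases eq_or_ne w 0 with rfl | hw0
  · simp
  obtain ⟨c, hc0, hc⟩ := exists_smul_unit w hw0
  obtain ⟨u, hu, hwu, huξ⟩ := exists_unit_orthogonal hn (fun i => c * w i) ξ
  have hcw : ∑ i, c * w i * ξ i = 0 := by
    simp_rw [mul_assoc]
    rw [← Finset.mul_sum, hw, mul_zero]
  have h₁ := h (fun i => c * w i) u hc hu hwu hcw huξ
  have h₂ := h (fun i => c * w i) (fun i => -u i) hc (by simpa using hu) (by simpa using hwu)
    hcw (by simpa using huξ)
  have h₃ : 2 * (c : ℂ) * ∑ k, (w k : ℂ) * v k = 0 := by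
    rw [← add_zero (0 : ℂ)]
    nth_rewrite 1 [← h₁]
    rw [← h₂, ← Finset.sum_add_distrib, Finset.mul_sum]
    refine Finset.sum_congr rfl fun k _ => ?_
    push_cast
    ring
  have hc0' : (2 * (c : ℂ)) ≠ 0 := mul_ne_zero two_ne_zero (by exact_mod_cast hc0)
  exact (mul_eq_zero.mp h₃).resolve_left hc0'

theorem stmt_10 (n : ℕ) (hn : 3 ≤ n)
    (A : (Fin n → ℝ) → Fin n → ℂ)
    (hA : ∀ k, Integrable (fun x => A x k) (volume : Measure (Fin n → ℝ)))
    -- (μ₁ + iμ₂)·Â(ξ) = 0 whenever |μ₁| = |μ₂| = 1, μ₁⊥μ₂, μ₁⊥ξ, μ₂⊥ξ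
    (hhyp : ∀ ξ μ₁ μ₂ : Fin n → ℝ,
      (∑ i, μ₁ i ^ 2) = 1 → (∑ i, μ₂ i ^ 2) = 1 →
      (∑ i, μ₁ i * μ₂ i) = 0 → (∑ i, μ₁ i * ξ i) = 0 → (∑ i, μ₂ i * ξ i) = 0 →
      (∑ k, ((μ₁ k : ℂ) + Complex.I * (μ₂ k : ℂ)) *
        ∫ x : Fin n → ℝ, A x k * Complex.exp (Complex.I * ((∑ i, x i * ξ i : ℝ) : ℂ))) = 0) :
    -- then ξ_j Â_k(ξ) = ξ_k Â_j(ξ) for all ξ, j, k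
    ∀ (ξ : Fin n → ℝ) (j k : Fin n),
      (ξ j : ℂ) * (∫ x : Fin n → ℝ, A x k * Complex.exp (Complex.I * ((∑ i, x i * ξ i : ℝ) : ℂ)))
      = (ξ k : ℂ) * ∫ x : Fin n → ℝ, A x j * Complex.exp (Complex.I * ((∑ i, x i * ξ i : ℝ) : ℂ)) := by
  intro ξ j k
  have key := sum_mul_eq_zero_of_orthogonal hn ξ _ (hhyp ξ)
    (fun i => ξ j * (Pi.single k 1 : Fin n → ℝ) i - ξ k * (Pi.single j 1 : Fin n → ℝ) i) (by
      simp [sub_mul, Finset.sum_sub_distrib, Pi.single_apply, mul_comm (ξ j)])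
  rw [← sub_eq_zero, ← key]
  simp [sub_mul, Finset.sum_sub_distrib, Pi.single_apply, apply_ite Complex.ofReal]
end

section
/- Let s, t ∈ ℝ with s ≠ 0, t ≠ 0, and s ≠ t, and let ω₁, ω₂, ω₃ be three distinct positive real numbers. Then the three vectors (1, ω_i^s, ω_i^t) ∈ ℝ³, i = 1, 2, 3, are linearly independent. -/
/-!
The matrix with rows `(1, ωᵢ ^ s, ωᵢ ^ t)` is shown to have trivial kernel. A kernel vector
`(a, b, c)` is a function `f x = a + b x ^ s + c x ^ t` vanishing at three distinct positive points.
By Rolle's theorem `f'` vanishes at two distinct positive points, and dividing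
`f' x = b s x ^ (s - 1) + c t x ^ (t - 1)` by `x ^ (s - 1)` shows that `b s + c t x ^ (t - s)`
vanishes there too. Since `x ↦ x ^ (t - s)` is injective on the positive reals, `c = 0`; then
`b = 0` and `a = 0`.
-/

/-- Rolle's theorem for `a + b x ^ s + c x ^ t`, with the factor `x ^ (s - 1)` removed from the
derivative. -/
lemma exists_reduced_deriv_eq_zero {s t a b c x y : ℝ} (hx : 0 < x) (hxy : x < y)
    (h1 : a + b * x ^ s + c * x ^ t = 0) (h2 : a + b * y ^ s + c * y ^ t = 0) :
    ∃ u, x < u ∧ u < y ∧ b * s + c * t * u ^ (t - s) = 0 := by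
  have hd : ∀ u : ℝ, 0 < u → HasDerivAt (fun u : ℝ => a + b * u ^ s + c * u ^ t)
      (b * (s * u ^ (s - 1)) + c * (t * u ^ (t - 1))) u := fun u hu =>
    (((Real.hasDerivAt_rpow_const (Or.inl hu.ne')).const_mul b).const_add a).add
      ((Real.hasDerivAt_rpow_const (Or.inl hu.ne')).const_mul c)
  obtain ⟨u, ⟨hxu, huy⟩, hu⟩ := exists_hasDerivAt_eq_zero hxy
    (fun u hu => (hd u (hx.trans_le hu.1)).continuousAt.continuousWithinAt)
    (h1.trans h2.symm) (fun u hu => hd u (hx.trans hu.1))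
  refine ⟨u, hxu, huy, ?_⟩
  have hu0 : 0 < u := hx.trans hxu
  have hsplit : u ^ (t - 1) = u ^ (t - s) * u ^ (s - 1) := by
    rw [← Real.rpow_add hu0]; ring_nf
  rw [hsplit] at hu
  have hfac : (b * s + c * t * u ^ (t - s)) * u ^ (s - 1) = 0 := by linarith
  exact (mul_eq_zero.mp hfac).resolve_right (Real.rpow_pos_of_pos hu0 _).ne'

lemma coeffs_eq_zero_of_lt {s t a b c x y z : ℝ} (hs : s ≠ 0) (ht : t ≠ 0) (hst : s ≠ t)
    (hx : 0 < x) (hxy : x < y) (hyz : y < z)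
    (h1 : a + b * x ^ s + c * x ^ t = 0) (h2 : a + b * y ^ s + c * y ^ t = 0)
    (h3 : a + b * z ^ s + c * z ^ t = 0) : a = 0 ∧ b = 0 ∧ c = 0 := by
  obtain ⟨u, hxu, huy, hu⟩ := exists_reduced_deriv_eq_zero hx hxy h1 h2
  obtain ⟨v, hyv, -, hv⟩ := exists_reduced_deriv_eq_zero (hx.trans hxy) hyz h2 h3
  have hne : u ^ (t - s) - v ^ (t - s) ≠ 0 := fun h =>
    (huy.trans hyv).ne ((Real.rpow_left_inj (hx.trans hxu).le ((hx.trans hxy).trans hyv).le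
      (sub_ne_zero.mpr hst.symm)).mp (sub_eq_zero.mp h))
  have hc : c = 0 := by
    have h : c * (t * (u ^ (t - s) - v ^ (t - s))) = 0 := by linarith
    exact (mul_eq_zero.mp h).resolve_right (mul_ne_zero ht hne)
  subst hc
  have hb : b = 0 := by simpa [hs] using hu
  subst hb
  exact ⟨by simpa using h1, rfl, rfl⟩

theorem stmt_12 (s t : ℝ) (hs : s ≠ 0) (ht : t ≠ 0) (hst : s ≠ t)
    (ω₁ ω₂ ω₃ : ℝ) (hω₁ : 0 < ω₁) (hω₂ : 0 < ω₂) (hω₃ : 0 < ω₃)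
    (h12 : ω₁ ≠ ω₂) (h13 : ω₁ ≠ ω₃) (h23 : ω₂ ≠ ω₃) :
    LinearIndependent ℝ
      ![![(1 : ℝ), ω₁ ^ s, ω₁ ^ t],
        ![(1 : ℝ), ω₂ ^ s, ω₂ ^ t],
        ![(1 : ℝ), ω₃ ^ s, ω₃ ^ t]] := by
  refine Matrix.linearIndependent_rows_of_det_ne_zero
    (A := !![(1 : ℝ), ω₁ ^ s, ω₁ ^ t; 1, ω₂ ^ s, ω₂ ^ t; 1, ω₃ ^ s, ω₃ ^ t]) fun hdet => ?_
  obtain ⟨v, hv0, hv⟩ := Matrix.exists_mulVec_eq_zero_iff.mpr hdet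
  have e1 : v 0 + v 1 * ω₁ ^ s + v 2 * ω₁ ^ t = 0 := by
    have := congrFun hv 0
    simp [Matrix.mulVec, dotProduct, Fin.sum_univ_three] at this
    linarith
  have e2 : v 0 + v 1 * ω₂ ^ s + v 2 * ω₂ ^ t = 0 := by
    have := congrFun hv 1
    simp [Matrix.mulVec, dotProduct, Fin.sum_univ_three] at this
    linarith
  have e3 : v 0 + v 1 * ω₃ ^ s + v 2 * ω₃ ^ t = 0 := by
    have := congrFun hv 2
    simp [Matrix.mulVec, dotProduct, Fin.sum_univ_three] at this
    linarith
  have key : v 0 = 0 ∧ v 1 = 0 ∧ v 2 = 0 := by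
    rcases lt_or_gt_of_ne h12 with h | h <;> rcases lt_or_gt_of_ne h13 with h' | h' <;>
      rcases lt_or_gt_of_ne h23 with h'' | h''
    · exact coeffs_eq_zero_of_lt hs ht hst hω₁ h h'' e1 e2 e3
    · exact coeffs_eq_zero_of_lt hs ht hst hω₁ h' h'' e1 e3 e2
    · linarith
    · exact coeffs_eq_zero_of_lt hs ht hst hω₃ h' h e3 e1 e2
    · exact coeffs_eq_zero_of_lt hs ht hst hω₂ h h' e2 e1 e3
    · linarith
    · exact coeffs_eq_zero_of_lt hs ht hst hω₂ h'' h' e2 e3 e1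
    · exact coeffs_eq_zero_of_lt hs ht hst hω₃ h'' h e3 e2 e1
  apply hv0
  ext i
  fin_cases i
  exacts [key.1, key.2.1, key.2.2]
end

section
/- Let n ≥ 3 and let ξ, μ₁, μ₂ ∈ ℝⁿ satisfy |μ₁| = |μ₂| = 1 and μ₁·μ₂ = μ₁·ξ = μ₂·ξ = 0. Let h > 0 with h|ξ| ≤ 2, and define ζ₁ = (ihξ)/2 + μ₁ + i√(1 − h²|ξ|²/4) μ₂ and ζ₂ = (ihξ)/2 − μ₁ − i√(1 − h²|ξ|²/4) μ₂. Then ζ₁·ζ₁ = 0, ζ₂·ζ₂ = 0, ζ₁ + ζ₂ = ihξ, and |ζ₁ − (μ₁ + iμ₂)| ≤ h|ξ| and |ζ₂ + μ₁ + iμ₂| ≤ h|ξ|. -/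
/-!
Write `s = √(1 - h²|ξ|²/4)`. Since `ξ`, `μ₁`, `μ₂` are pairwise orthogonal, the vector
`ζ = μ₁ + i(hξ/2 + sμ₂)` has orthogonal real and imaginary parts, with squared lengths `1` and
`h²|ξ|²/4 + s² = 1`, so `ζ · ζ = 0`. Moreover `ζ - (μ₁ + iμ₂) = i(hξ/2 + (s - 1)μ₂)` has squared
norm `h²|ξ|²/4 + (1 - s)²`, and `0 ≤ s ≤ 1` gives `(1 - s)² ≤ 1 - s² = h²|ξ|²/4`, so the squared
norm is at most `h²|ξ|²/2`. This is done once, for `ζ₁`, in `cgo_null` and `cgo_bound`; the vector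
`ζ₂` is the same one with `μ₁, μ₂` replaced by `-μ₁, -μ₂`.
-/


open MeasureTheory Filter Topology

/-- Pythagoras: `|(h/2)ξ + cμ|² = h²|ξ|²/4 + c²` for a unit vector `μ` orthogonal to `ξ`. -/
lemma sum_sq_half_add {n : ℕ} {ξ μ : Fin n → ℝ} (hμ : (∑ i, μ i ^ 2) = 1)
    (hμξ : (∑ i, μ i * ξ i) = 0) (h c : ℝ) :
    ∑ j, (h * ξ j / 2 + c * μ j) ^ 2 = h ^ 2 * (∑ i, ξ i ^ 2) / 4 + c ^ 2 := by
  have key : ∑ j, (h * ξ j / 2 + c * μ j) ^ 2 = h ^ 2 / 4 * (∑ j, ξ j ^ 2)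
      + h * c * (∑ j, μ j * ξ j) + c ^ 2 * ∑ j, μ j ^ 2 := by
    simp only [Finset.mul_sum, ← Finset.sum_add_distrib]
    exact Finset.sum_congr rfl fun j _ => by ring
  rw [key, hμ, hμξ]
  ring

lemma cgo_null {n : ℕ} {ξ μ₁ μ₂ : Fin n → ℝ}
    (hμ₁ : (∑ i, μ₁ i ^ 2) = 1) (hμ₂ : (∑ i, μ₂ i ^ 2) = 1)
    (hμ₁μ₂ : (∑ i, μ₁ i * μ₂ i) = 0)
    (hμ₁ξ : (∑ i, μ₁ i * ξ i) = 0) (hμ₂ξ : (∑ i, μ₂ i * ξ i) = 0)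
    {h s : ℝ} (hs : s ^ 2 = 1 - h ^ 2 * (∑ i, ξ i ^ 2) / 4) {ζ : Fin n → ℂ}
    (hζ : ∀ j, ζ j = Complex.I * (h : ℂ) * (ξ j : ℂ) / 2 + (μ₁ j : ℂ)
      + Complex.I * (s : ℂ) * (μ₂ j : ℂ)) :
    ∑ j, ζ j * ζ j = 0 := by
  have cross : ∑ j, μ₁ j * (h * ξ j / 2 + s * μ₂ j) = 0 := by
    have key : ∑ j, μ₁ j * (h * ξ j / 2 + s * μ₂ j)
        = h / 2 * (∑ j, μ₁ j * ξ j) + s * ∑ j, μ₁ j * μ₂ j := by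
      simp only [Finset.mul_sum, ← Finset.sum_add_distrib]
      exact Finset.sum_congr rfl fun j _ => by ring
    rw [key, hμ₁ξ, hμ₁μ₂]
    ring
  have split : ∑ j, ζ j * ζ j = ((∑ j, μ₁ j ^ 2 : ℝ) : ℂ)
      - ((∑ j, (h * ξ j / 2 + s * μ₂ j) ^ 2 : ℝ) : ℂ)
      + 2 * Complex.I * ((∑ j, μ₁ j * (h * ξ j / 2 + s * μ₂ j) : ℝ) : ℂ) := by
    push_cast
    simp only [Finset.mul_sum, ← Finset.sum_add_distrib, ← Finset.sum_sub_distrib]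
    refine Finset.sum_congr rfl fun j _ => ?_
    rw [hζ]
    linear_combination ((h : ℂ) * ξ j / 2 + s * μ₂ j) ^ 2 * Complex.I_sq
  rw [split, cross, hμ₁, sum_sq_half_add hμ₂ hμ₂ξ, hs]
  push_cast
  ring

lemma cgo_bound {n : ℕ} {ξ μ₁ μ₂ : Fin n → ℝ}
    (hμ₂ : (∑ i, μ₂ i ^ 2) = 1) (hμ₂ξ : (∑ i, μ₂ i * ξ i) = 0)
    {h s : ℝ} (hh : 0 ≤ h) (hs0 : 0 ≤ s)
    (hs : s ^ 2 = 1 - h ^ 2 * (∑ i, ξ i ^ 2) / 4) {ζ : Fin n → ℂ}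
    (hζ : ∀ j, ζ j = Complex.I * (h : ℂ) * (ξ j : ℂ) / 2 + (μ₁ j : ℂ)
      + Complex.I * (s : ℂ) * (μ₂ j : ℂ)) :
    Real.sqrt (∑ j, ‖ζ j - ((μ₁ j : ℂ) + Complex.I * (μ₂ j : ℂ))‖ ^ 2)
      ≤ h * Real.sqrt (∑ i, ξ i ^ 2) := by
  have hX : 0 ≤ ∑ i, ξ i ^ 2 := Finset.sum_nonneg fun i _ => sq_nonneg _
  have hT : 0 ≤ h ^ 2 * ∑ i, ξ i ^ 2 := by positivity
  have hterm : ∀ j, ‖ζ j - ((μ₁ j : ℂ) + Complex.I * (μ₂ j : ℂ))‖ ^ 2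
      = (h * ξ j / 2 + (s - 1) * μ₂ j) ^ 2 := by
    intro j
    have e : ζ j - ((μ₁ j : ℂ) + Complex.I * (μ₂ j : ℂ))
        = Complex.I * ((h * ξ j / 2 + (s - 1) * μ₂ j : ℝ) : ℂ) := by
      rw [hζ]
      push_cast
      ring
    rw [e, norm_mul, Complex.norm_I, one_mul, Complex.norm_real, Real.norm_eq_abs, sq_abs]
  have hs1 : s ≤ 1 := by nlinarith
  refine Real.sqrt_le_iff.mpr ⟨by positivity, ?_⟩
  rw [Finset.sum_congr rfl fun j _ => hterm j, sum_sq_half_add hμ₂ hμ₂ξ, mul_pow,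
    Real.sq_sqrt hX]
  -- `(1 - s)² ≤ 1 - s²` amounts to `0 ≤ 2s(1 - s)`.
  nlinarith [mul_nonneg hs0 (sub_nonneg.mpr hs1)]

theorem stmt_15 (n : ℕ) (hn : 3 ≤ n)
    (ξ μ₁ μ₂ : Fin n → ℝ)
    (hμ₁ : (∑ i, μ₁ i ^ 2) = 1) (hμ₂ : (∑ i, μ₂ i ^ 2) = 1)
    (hμ₁μ₂ : (∑ i, μ₁ i * μ₂ i) = 0)
    (hμ₁ξ : (∑ i, μ₁ i * ξ i) = 0) (hμ₂ξ : (∑ i, μ₂ i * ξ i) = 0)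
    (h : ℝ) (hh : 0 < h) (hhξ : h * Real.sqrt (∑ i, ξ i ^ 2) ≤ 2)
    (ζ₁ ζ₂ : Fin n → ℂ)
    (hζ₁ : ∀ j, ζ₁ j = Complex.I * (h : ℂ) * (ξ j : ℂ) / 2 + (μ₁ j : ℂ)
      + Complex.I * ((Real.sqrt (1 - h ^ 2 * (∑ i, ξ i ^ 2) / 4) : ℝ) : ℂ) * (μ₂ j : ℂ))
    (hζ₂ : ∀ j, ζ₂ j = Complex.I * (h : ℂ) * (ξ j : ℂ) / 2 - (μ₁ j : ℂ)
      - Complex.I * ((Real.sqrt (1 - h ^ 2 * (∑ i, ξ i ^ 2) / 4) : ℝ) : ℂ) * (μ₂ j : ℂ)) :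
    (∑ j, ζ₁ j * ζ₁ j) = 0 ∧ (∑ j, ζ₂ j * ζ₂ j) = 0 ∧
    (∀ j, ζ₁ j + ζ₂ j = Complex.I * (h : ℂ) * (ξ j : ℂ)) ∧
    Real.sqrt (∑ j, ‖ζ₁ j - ((μ₁ j : ℂ) + Complex.I * (μ₂ j : ℂ))‖ ^ 2)
      ≤ h * Real.sqrt (∑ i, ξ i ^ 2) ∧
    Real.sqrt (∑ j, ‖ζ₂ j + (μ₁ j : ℂ) + Complex.I * (μ₂ j : ℂ)‖ ^ 2)
      ≤ h * Real.sqrt (∑ i, ξ i ^ 2) := by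
  have hX : 0 ≤ ∑ i, ξ i ^ 2 := Finset.sum_nonneg fun i _ => sq_nonneg _
  -- `h|ξ| ≤ 2` makes the radicand nonnegative, so that the square root is a genuine one.
  have hrad : 0 ≤ 1 - h ^ 2 * (∑ i, ξ i ^ 2) / 4 := by
    have h1 := pow_le_pow_left₀ (by positivity) hhξ 2
    rw [mul_pow, Real.sq_sqrt hX] at h1
    linarith
  have hs := Real.sq_sqrt hrad
  have hs0 := Real.sqrt_nonneg (1 - h ^ 2 * (∑ i, ξ i ^ 2) / 4)
  have hζ₂' : ∀ j, ζ₂ j = Complex.I * (h : ℂ) * (ξ j : ℂ) / 2 + ((-μ₁ j : ℝ) : ℂ)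
      + Complex.I * ((Real.sqrt (1 - h ^ 2 * (∑ i, ξ i ^ 2) / 4) : ℝ) : ℂ)
        * ((-μ₂ j : ℝ) : ℂ) := by
    intro j
    rw [hζ₂]
    push_cast
    ring
  have hν₁ : ∑ i, (-μ₁ i) ^ 2 = 1 := by simpa using hμ₁
  have hν₂ : ∑ i, (-μ₂ i) ^ 2 = 1 := by simpa using hμ₂
  have hν₁ν₂ : ∑ i, -μ₁ i * -μ₂ i = 0 := by simpa using hμ₁μ₂
  have hν₁ξ : ∑ i, -μ₁ i * ξ i = 0 := by simpa using hμ₁ξ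
  have hν₂ξ : ∑ i, -μ₂ i * ξ i = 0 := by simpa using hμ₂ξ
  refine ⟨cgo_null hμ₁ hμ₂ hμ₁μ₂ hμ₁ξ hμ₂ξ hs hζ₁, cgo_null hν₁ hν₂ hν₁ν₂ hν₁ξ hν₂ξ hs hζ₂',
    fun j => ?_, cgo_bound hμ₂ hμ₂ξ hh.le hs0 hs hζ₁, ?_⟩
  · rw [hζ₁, hζ₂]
    ring
  · convert cgo_bound hν₂ hν₂ξ hh.le hs0 hs hζ₂' using 5 with j
    push_cast
    ring
end
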